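/- Any two injective Lie algebra homomorphisms ε, ε' from the complex simple Lie algebra f₄ to the complex simple Lie algebra e₆ are conjugate by an automorphism of e₆: there exists a Lie algebra automorphism φ of e₆ such that ε' = φ ∘ ε. -/

import Mathlib

/-!
Let `κ` be the Killing form of `g = e₆`. Cartan's criterion makes `κ` nondegenerate on `ε(f₄)`, so
`g = ε(f₄) ⊕ W` with `W` the orthogonal complement, an `f₄`-module of dimension at most
`78 - 52 = 26`. If all weights of `W` vanish, `W` is a trivial module, so `ε(f₄)` is an ideal and
`ε` is onto. Otherwise a Weyl orbit of 24 nonzero weights leaves so little room that `W` must have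
all weights of the 26-dimensional representation and be irreducible with a prescribed highest
weight; in particular `W` is determined up to isomorphism.

`W` carries no nonzero invariant alternating trilinear form. Applied to `κ(⁅x, y⁆, z)`, this gives
`⁅W, W⁆ ⊆ ε(f₄)`. For two embeddings, Schur's lemma allows one to rescale the isomorphism
`t : W → W'` to an isometry for `κ`. Then `ε x + w ↦ ε' x + t w` is an automorphism of `g`: the
bracket of two elements of `W` lies in `ε(f₄)`, and is determined by `κ` and the module structure.
-/

namespace F4E6

open Module Matrix
open LieModule (toEnd toEnd_apply_apply)

/-! ### Chevalley generators -/

section Chevalley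

variable (K : Type*) {ι L : Type*} [CommRing K] [LieRing L] [LieAlgebra K L]

/-- The family `h, e, f` generates `L` and satisfies the relations of Chevalley generators for the
matrix `A`, where `⁅h i, e j⁆ = A i j • e j`. Serre's relations are replaced by the local nilpotency
of the `ad (e i)` and `ad (f i)`, expressed through Engel subalgebras. -/
structure IsChevalley (A : Matrix ι ι ℤ) (h e f : ι → L) : Prop where
  lie_h_h : ∀ i j, ⁅h i, h j⁆ = 0
  lie_h_e : ∀ i j, ⁅h i, e j⁆ = A i j • e j
  lie_h_f : ∀ i j, ⁅h i, f j⁆ = -(A i j • f j)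
  lie_e_f : ∀ i, ⁅e i, f i⁆ = h i
  lie_e_f_of_ne : ∀ i j, i ≠ j → ⁅e i, f j⁆ = 0
  engel_e : ∀ i, LieSubalgebra.engel K (e i) = ⊤
  engel_f : ∀ i, LieSubalgebra.engel K (f i) = ⊤
  lieSpan_eq_top : LieSubalgebra.lieSpan K L (Set.range e ∪ Set.range f) = ⊤

variable {K}

lemma IsChevalley.symm {A : Matrix ι ι ℤ} {h e f : ι → L} (C : IsChevalley K A h e f) :
    IsChevalley K A (-h) f e where
  lie_h_h i j := by simp [C.lie_h_h]
  lie_h_e i j := by simp [C.lie_h_f]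
  lie_h_f i j := by simp [C.lie_h_e]
  lie_e_f i := by rw [← lie_skew, C.lie_e_f]; rfl
  lie_e_f_of_ne i j hij := by rw [← lie_skew, C.lie_e_f_of_ne j i hij.symm, neg_zero]
  engel_e := C.engel_f
  engel_f := C.engel_e
  lieSpan_eq_top := by rw [Set.union_comm, C.lieSpan_eq_top]

lemma IsChevalley.mem_of_forall_mem {A : Matrix ι ι ℤ} {h e f : ι → L} (C : IsChevalley K A h e f)
    {H : LieSubalgebra K L} (he : ∀ i, e i ∈ H) (hf : ∀ i, f i ∈ H) (x : L) : x ∈ H := by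
  have hle : LieSubalgebra.lieSpan K L (Set.range e ∪ Set.range f) ≤ H := by
    rw [LieSubalgebra.lieSpan_le]
    rintro _ (⟨i, rfl⟩ | ⟨i, rfl⟩)
    exacts [he i, hf i]
  exact hle (by rw [C.lieSpan_eq_top]; trivial)

end Chevalley

section Serre

open CartanMatrix

variable (K : Type*) {ι : Type*} [DecidableEq ι] [CommRing K] (A : Matrix ι ι ℤ)

/-- The canonical map from the free Lie algebra onto the Lie algebra presented by Serre's
relations. -/
noncomputable def serreMk : FreeLieAlgebra K (Generators ι) →ₗ⁅K⁆ A.ToLieAlgebra K :=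
  { toLinearMap := (LieSubmodule.Quotient.mk' (Relations.toIdeal K A)).toLinearMap
    map_lie' := fun {x y} => LieSubmodule.Quotient.mk_bracket (I := Relations.toIdeal K A) x y }

/-- The Chevalley generator `h i` of the Lie algebra presented by Serre's relations. -/
noncomputable def serreH (i : ι) : A.ToLieAlgebra K := serreMk K A (.of K (.H i))

/-- The Chevalley generator `e i` of the Lie algebra presented by Serre's relations. -/
noncomputable def serreE (i : ι) : A.ToLieAlgebra K := serreMk K A (.of K (.E i))

/-- The Chevalley generator `f i` of the Lie algebra presented by Serre's relations. -/
noncomputable def serreF (i : ι) : A.ToLieAlgebra K := serreMk K A (.of K (.F i))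

lemma serreMk_surjective : Function.Surjective (serreMk K A) :=
  LieSubmodule.Quotient.surjective_mk' (Relations.toIdeal K A)

variable {A} in
lemma serreMk_eq_zero {x : FreeLieAlgebra K (Generators ι)} (hx : x ∈ Relations.toSet K A) :
    serreMk K A x = 0 :=
  (LieSubmodule.Quotient.mk_eq_zero' (N := Relations.toIdeal K A)).mpr
    (LieSubmodule.subset_lieSpan hx)

lemma serreMk_ad_pow (x y : FreeLieAlgebra K (Generators ι)) (n : ℕ) :
    serreMk K A ((LieAlgebra.ad K _ x ^ n) y) =
      (LieAlgebra.ad K _ (serreMk K A x) ^ n) (serreMk K A y) := by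
  induction n generalizing y with
  | zero => simp
  | succ n ih => simp [pow_succ, ih]

lemma lie_serreH_serreH (i j : ι) : ⁅serreH K A i, serreH K A j⁆ = 0 := by
  have := serreMk_eq_zero K (A := A) (x := Relations.HH K (i, j)) (by simp [Relations.toSet])
  simpa [Relations.HH, serreH] using this

lemma lie_serreH_serreE (i j : ι) : ⁅serreH K A i, serreE K A j⁆ = A i j • serreE K A j := by
  have := serreMk_eq_zero K (A := A) (x := Relations.HE K A (i, j)) (by simp [Relations.toSet])
  simpa [Relations.HE, sub_eq_zero, serreH, serreE] using this

lemma lie_serreH_serreF (i j : ι) : ⁅serreH K A i, serreF K A j⁆ = -(A i j • serreF K A j) := by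
  have := serreMk_eq_zero K (A := A) (x := Relations.HF K A (i, j)) (by simp [Relations.toSet])
  simpa [Relations.HF, add_eq_zero_iff_eq_neg, serreH, serreF] using this

lemma lie_serreE_serreF (i j : ι) :
    ⁅serreE K A i, serreF K A j⁆ = if i = j then serreH K A i else 0 := by
  have := serreMk_eq_zero K (A := A) (x := Relations.EF K (i, j)) (by simp [Relations.toSet])
  by_cases hij : i = j
  · subst hij
    simpa [Relations.EF, sub_eq_zero, serreE, serreF, serreH] using this
  · simpa [Relations.EF, hij, serreE, serreF] using this

lemma ad_serreE_pow (i j : ι) :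
    (LieAlgebra.ad K _ (serreE K A i) ^ (-A i j).toNat) ⁅serreE K A i, serreE K A j⁆ = 0 := by
  have := serreMk_eq_zero K (A := A) (x := Relations.adE K A (i, j)) (by simp [Relations.toSet])
  simpa only [Relations.adE, Function.uncurry, Function.comp_apply, serreMk_ad_pow, LieHom.map_lie,
    serreE] using this

lemma ad_serreF_pow (i j : ι) :
    (LieAlgebra.ad K _ (serreF K A i) ^ (-A i j).toNat) ⁅serreF K A i, serreF K A j⁆ = 0 := by
  have := serreMk_eq_zero K (A := A) (x := Relations.adF K A (i, j)) (by simp [Relations.toSet])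
  simpa only [Relations.adF, Function.uncurry, Function.comp_apply, serreMk_ad_pow, LieHom.map_lie,
    serreF] using this

lemma mem_of_forall_serre_mem {H : LieSubalgebra K (A.ToLieAlgebra K)}
    (he : ∀ i, serreE K A i ∈ H) (hf : ∀ i, serreF K A i ∈ H) (x : A.ToLieAlgebra K) : x ∈ H := by
  have hh (i : ι) : serreH K A i ∈ H := by
    rw [← show ⁅serreE K A i, serreF K A i⁆ = serreH K A i by simp [lie_serreE_serreF]]
    exact H.lie_mem (he i) (hf i)
  let φ : FreeLieAlgebra K (Generators ι) →ₗ⁅K⁆ H := FreeLieAlgebra.lift K fun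
    | .H i => ⟨serreH K A i, hh i⟩
    | .E i => ⟨serreE K A i, he i⟩
    | .F i => ⟨serreF K A i, hf i⟩
  have hφ : H.incl.comp φ = serreMk K A := by
    refine FreeLieAlgebra.hom_ext fun x => ?_
    cases x <;> simp [φ, serreH, serreE, serreF]
  obtain ⟨y, rfl⟩ := serreMk_surjective K A x
  rw [← hφ]
  exact (φ y).2

/-- The Engel subalgebra of `e i` contains all generators: `e j` by Serre's relation, and `f i`
because `ad (e i) ^ 3` kills it. -/
lemma engel_serreE (i : ι) : LieSubalgebra.engel K (serreE K A i) = ⊤ := by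
  refine eq_top_iff.mpr fun x _ =>
    mem_of_forall_serre_mem K A (fun j => ?_) (fun j => ?_) x
  · exact (LieSubalgebra.mem_engel_iff _ _ _).mpr ⟨_ + 1, ad_serreE_pow K A i j⟩
  · refine (LieSubalgebra.mem_engel_iff _ _ _).mpr ⟨3, ?_⟩
    by_cases hij : i = j
    · simp [pow_succ, ← hij, lie_serreE_serreF, ← lie_skew _ (serreH K A i), lie_serreH_serreE]
    · simp [pow_succ, lie_serreE_serreF, hij]

lemma engel_serreF (i : ι) : LieSubalgebra.engel K (serreF K A i) = ⊤ := by
  refine eq_top_iff.mpr fun x _ =>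
    mem_of_forall_serre_mem K A (fun j => ?_) (fun j => ?_) x
  · refine (LieSubalgebra.mem_engel_iff _ _ _).mpr ⟨3, ?_⟩
    by_cases hij : j = i
    · simp [pow_succ, hij, ← lie_skew (serreF K A i) (serreE K A i), lie_serreE_serreF,
        ← lie_skew _ (serreH K A i), lie_serreH_serreF]
    · simp [pow_succ, ← lie_skew (serreF K A i) (serreE K A j), lie_serreE_serreF, hij]
  · exact (LieSubalgebra.mem_engel_iff _ _ _).mpr ⟨_ + 1, ad_serreF_pow K A i j⟩

theorem isChevalley_serre : IsChevalley K A (serreH K A) (serreE K A) (serreF K A) where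
  lie_h_h := lie_serreH_serreH K A
  lie_h_e := lie_serreH_serreE K A
  lie_h_f := lie_serreH_serreF K A
  lie_e_f i := by simp [lie_serreE_serreF]
  lie_e_f_of_ne i j hij := by simp [lie_serreE_serreF, hij]
  engel_e := engel_serreE K A
  engel_f := engel_serreF K A
  lieSpan_eq_top := eq_top_iff.mpr fun x _ => mem_of_forall_serre_mem K A
    (fun i => LieSubalgebra.subset_lieSpan (Or.inl ⟨i, rfl⟩))
    (fun i => LieSubalgebra.subset_lieSpan (Or.inr ⟨i, rfl⟩)) x

end Serre

/-! ### Representations of `sl₂` -/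

section Sl2

variable {K L M : Type*} [Field K] [LieRing L] [LieAlgebra K L]
  [AddCommGroup M] [Module K M] [LieRingModule L M] [LieModule K L M]
  {h e f : L}

lemma lie_h_pow_toEnd_e (t : IsSl2Triple h e f) {x : M} {c : K} (hx : ⁅h, x⁆ = c • x) (n : ℕ) :
    ⁅h, (toEnd K L M e ^ n) x⁆ = (c + 2 * n) • (toEnd K L M e ^ n) x := by
  induction n with
  | zero => simpa using hx
  | succ n ih =>
    rw [pow_succ', Module.End.mul_apply, toEnd_apply_apply, leibniz_lie, ih,
      t.lie_h_e_smul K, smul_lie, lie_smul, ← add_smul]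
    push_cast
    ring_nf

lemma exists_hasPrimitiveVectorWith_pow_toEnd_e (t : IsSl2Triple h e f) {x : M} {c : K}
    (hx0 : x ≠ 0) (hx : ⁅h, x⁆ = c • x) (hnil : ∃ n, (toEnd K L M e ^ n) x = 0) :
    ∃ n : ℕ, t.HasPrimitiveVectorWith ((toEnd K L M e ^ n) x) (c + 2 * n) := by
  obtain ⟨n, hn, hn'⟩ := Nat.exists_not_and_succ_of_not_zero_of_exists (by simpa using hx0) hnil
  exact ⟨n, hn, lie_h_pow_toEnd_e t hx n, by simpa [pow_succ'] using hn'⟩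

/-- The relation `⁅h, e ^ n⁆ = 2 n e ^ n` makes the nonzero powers of `e` eigenvectors of `ad h` on
`End M` with distinct eigenvalues. -/
lemma isNilpotent_toEnd_e [CharZero K] [FiniteDimensional K M] (t : IsSl2Triple h e f) :
    IsNilpotent (toEnd K L M e) := by
  have heig (n : ℕ) : ⁅h, toEnd K L M e ^ n⁆ = (2 * n : K) • toEnd K L M e ^ n := by
    induction n with
    | zero => ext x; simp
    | succ n ih =>
      have h1 : ⁅h, toEnd K L M e⁆ = (2 : K) • toEnd K L M e := by
        ext x
        simp [LieHom.lie_apply, ← lie_lie, t.lie_h_e_smul K]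
      ext x
      have h2 := congr($ih ⁅e, x⁆)
      have h3 := congr((toEnd K L M e ^ n) ($h1 x))
      simp only [LieHom.lie_apply, LinearMap.smul_apply, toEnd_apply_apply, map_sub,
        map_smul] at h2 h3 ⊢
      simp only [pow_succ, Module.End.mul_apply, toEnd_apply_apply]
      push_cast
      rw [mul_add, add_smul, ← h2, mul_one, ← h3]
      abel
  by_contra hne
  have hinf : (Set.range fun n : ℕ => (2 * n : K)).Infinite := by
    rw [Set.infinite_range_iff fun m n => by simp]
    infer_instance
  refine hinf ((Module.End.finite_hasEigenvalue (toEnd K L (Module.End K M) h)).subset ?_)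
  rintro _ ⟨n, rfl⟩
  exact Module.End.hasEigenvalue_of_hasEigenvector
    ⟨Module.End.mem_eigenspace_iff.mpr (heig n), fun h0 => hne ⟨n, h0⟩⟩

lemma exists_int_of_lie_eq_smul [CharZero K] [FiniteDimensional K M] (t : IsSl2Triple h e f)
    {x : M} {c : K} (hx0 : x ≠ 0) (hx : ⁅h, x⁆ = c • x) : ∃ n : ℤ, c = n := by
  obtain ⟨k, hk⟩ := isNilpotent_toEnd_e (K := K) (M := M) t
  obtain ⟨n, P⟩ := exists_hasPrimitiveVectorWith_pow_toEnd_e t hx0 hx ⟨k, by rw [hk]; simp⟩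
  obtain ⟨m, hm⟩ := P.exists_nat
  exact ⟨m - 2 * n, by push_cast; linear_combination hm⟩

lemma lie_f_ne_zero_of_pos [CharZero K] (t : IsSl2Triple h e f) {x : M} {n : ℤ}
    (hx0 : x ≠ 0) (hx : ⁅h, x⁆ = n • x) (hn : 0 < n) (hnil : ∃ k, (toEnd K L M e ^ k) x = 0) :
    ⁅f, x⁆ ≠ 0 := by
  intro hfx
  have P : t.symm.HasPrimitiveVectorWith x (-n : K) :=
    ⟨hx0, by rw [neg_lie, hx, neg_smul, Int.cast_smul_eq_zsmul], hfx⟩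
  obtain ⟨k, hk, hk'⟩ := Nat.exists_not_and_succ_of_not_zero_of_exists (by simpa using hx0) hnil
  have := P.lie_e_pow_succ_toEnd_f k
  rw [hk', lie_zero, eq_comm, smul_eq_zero_iff_left hk, mul_eq_zero] at this
  have : (k + 1 : ℤ) * (-n - k) = 0 := by exact_mod_cast mul_eq_zero.mpr this
  nlinarith

/-- Raise `x` to a primitive vector and lower that again, to the opposite weight. -/
lemma exists_pow_f_pow_e_ne_zero [CharZero K] (t : IsSl2Triple h e f) {x : M} {n : ℕ}
    (hx0 : x ≠ 0) (hx : ⁅h, x⁆ = (n : K) • x) (hnil : ∃ k, (toEnd K L M e ^ k) x = 0) :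
    ∃ k : ℕ, (toEnd K L M f ^ (n + k)) ((toEnd K L M e ^ k) x) ≠ 0 := by
  obtain ⟨k, P⟩ := exists_hasPrimitiveVectorWith_pow_toEnd_e t hx0 hx hnil
  have P' : t.HasPrimitiveVectorWith ((toEnd K L M e ^ k) x) ((n + 2 * k : ℕ) : K) := by
    simpa using P
  exact ⟨k, P'.pow_toEnd_f_ne_zero_of_eq_nat rfl (by omega)⟩

end Sl2

/-! ### Weight spaces -/

section Independent

variable {K M κ : Type*} [Field K] [AddCommGroup M] [Module K M] {p : κ → Submodule K M}

lemma inf_iSup_eq_of_iSupIndep {q : κ → Submodule K M} (hp : iSupIndep p) (hq : ∀ i, q i ≤ p i)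
    (i : κ) : p i ⊓ ⨆ j, q j = q i := by
  have hsup : ⨆ j, q j = q i ⊔ ⨆ (j) (_ : j ≠ i), q j := by
    refine le_antisymm (iSup_le fun j => ?_)
      (sup_le (le_iSup q i) (iSup₂_le fun j _ => le_iSup q j))
    by_cases hj : j = i
    · exact hj ▸ le_sup_left
    · exact le_sup_of_le_right (le_iSup₂_of_le j hj le_rfl)
  have hdisj : p i ⊓ ⨆ (j) (_ : j ≠ i), q j = ⊥ :=
    ((hp i).mono_right (iSup₂_mono fun j _ => hq j)).eq_bot
  rw [hsup, inf_comm, sup_inf_assoc_of_le _ (hq i), inf_comm, hdisj, sup_bot_eq]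

lemma finrank_biSup_of_iSupIndep [FiniteDimensional K M] (hp : iSupIndep p) (s : Finset κ) :
    finrank K ↥(⨆ i ∈ s, p i) = ∑ i ∈ s, finrank K (p i) := by
  classical
  induction s using Finset.induction_on with
  | empty => simp
  | insert a s ha ih =>
    have hdisj : p a ⊓ ⨆ i ∈ s, p i = ⊥ :=
      (hp.disjoint_biSup (y := (s : Set κ)) (by simpa using ha)).eq_bot
    have := Submodule.finrank_sup_add_finrank_inf_eq (p a) (⨆ i ∈ s, p i)
    rw [hdisj, finrank_bot, add_zero, ih] at this
    rw [Finset.iSup_insert, Finset.sum_insert ha, this]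

end Independent

section WeightSpaces

variable (K : Type*) {ι L : Type*} (M : Type*) [Field K] [LieRing L] [LieAlgebra K L]
  [AddCommGroup M] [Module K M] [LieRingModule L M] [LieModule K L M]

/-- The simultaneous eigenspace of the family `h` in the module `M` for the integral eigenvalues
`l`. Weights are thus given by their coordinates with respect to the coroots `h i`. -/
def wtSpace (h : ι → L) (l : ι → ℤ) : Submodule K M where
  carrier := {x | ∀ i, ⁅h i, x⁆ = l i • x}
  add_mem' hx hy i := by rw [lie_add, hx i, hy i, smul_add]
  zero_mem' i := by simp
  smul_mem' c x hx i := by rw [lie_smul, hx i, smul_comm]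

variable {K M} {h : ι → L}

lemma mem_wtSpace {l : ι → ℤ} {x : M} : x ∈ wtSpace K M h l ↔ ∀ i, ⁅h i, x⁆ = l i • x := Iff.rfl

lemma wtSpace_neg {l : ι → ℤ} : wtSpace K M (-h) l = wtSpace K M h (-l) := by
  ext x
  simp only [mem_wtSpace, Pi.neg_apply, neg_lie, neg_smul]
  exact forall_congr' fun i => neg_eq_iff_eq_neg

lemma lie_mem_wtSpace {l m : ι → ℤ} {x : L} {y : M} (hx : x ∈ wtSpace K L h l)
    (hy : y ∈ wtSpace K M h m) : ⁅x, y⁆ ∈ wtSpace K M h (l + m) := fun i => by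
  rw [leibniz_lie, hx i, hy i, zsmul_lie, lie_zsmul, ← add_smul, Pi.add_apply]

lemma iSupIndep_wtSpace [CharZero K] (hh : ∀ i j, ⁅h i, h j⁆ = 0) :
    iSupIndep (wtSpace K M h) := by
  have hgen : iSupIndep fun χ : ι → K ↦ ⨅ i, (toEnd K L M (h i)).maxGenEigenspace (χ i) := by
    refine Module.End.independent_iInf_maxGenEigenspace_of_forall_mapsTo _ fun i j c =>
      Module.End.mapsTo_maxGenEigenspace_of_comm ?_ c
    ext x
    simp [leibniz_lie (h j) (h i) x, hh]
  refine (hgen.comp (f := fun l : ι → ℤ => fun i => (l i : K)) fun l m hlm => ?_).mono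
    fun l x hx => ?_
  · ext i
    simpa using congrFun hlm i
  · simp only [Function.comp_apply, Submodule.mem_iInf, Module.End.mem_maxGenEigenspace]
    exact fun i => ⟨1, by simp [hx i, Int.cast_smul_eq_zsmul]⟩

lemma eq_of_mem_wtSpace [CharZero K] (hh : ∀ i j, ⁅h i, h j⁆ = 0) {l m : ι → ℤ} {x : M}
    (hx0 : x ≠ 0) (hl : x ∈ wtSpace K M h l) (hm : x ∈ wtSpace K M h m) : l = m := by
  by_contra hlm
  exact hx0 (Submodule.disjoint_def.mp ((iSupIndep_wtSpace hh).pairwiseDisjoint hlm) x hl hm)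

lemma sum_finrank_wtSpace_le [CharZero K] [FiniteDimensional K M] (hh : ∀ i j, ⁅h i, h j⁆ = 0)
    (s : Finset (ι → ℤ)) : ∑ l ∈ s, finrank K (wtSpace K M h l) ≤ finrank K M := by
  rw [← finrank_biSup_of_iSupIndep (iSupIndep_wtSpace hh)]
  exact Submodule.finrank_le _

lemma card_le_sum_finrank_wtSpace [FiniteDimensional K M] {s : Finset (ι → ℤ)}
    (hs : ∀ l ∈ s, wtSpace K M h l ≠ ⊥) : s.card ≤ ∑ l ∈ s, finrank K (wtSpace K M h l) := by
  rw [Finset.card_eq_sum_ones]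
  exact Finset.sum_le_sum fun l hl => Submodule.one_le_finrank_iff.mpr (hs l hl)

lemma mem_span_inter_wtSpace [CharZero K] (hh : ∀ i j, ⁅h i, h j⁆ = 0) {S : Set M}
    (hS : ∀ x ∈ S, ∃ l, x ∈ wtSpace K M h l) {x : M} {l : ι → ℤ} (hx : x ∈ wtSpace K M h l)
    (hxS : x ∈ Submodule.span K S) : x ∈ Submodule.span K (S ∩ wtSpace K M h l) := by
  rw [← inf_iSup_eq_of_iSupIndep (iSupIndep_wtSpace hh)
    (q := fun l => Submodule.span K (S ∩ wtSpace K M h l))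
    (fun l => Submodule.span_le.mpr Set.inter_subset_right) l]
  refine ⟨hx, Submodule.span_le.mpr (fun y hy => ?_) hxS⟩
  obtain ⟨m, hm⟩ := hS y hy
  exact Submodule.mem_iSup_of_mem m (Submodule.subset_span ⟨hy, hm⟩)

/-- Lie's theorem for the abelian subalgebra generated by the `h i`. -/
lemma exists_forall_lie_eq_smul [CharZero K] [IsAlgClosed K] [FiniteDimensional K M] [Nontrivial M]
    (hh : ∀ i j, ⁅h i, h j⁆ = 0) : ∃ (c : ι → K) (x : M), x ≠ 0 ∧ ∀ i, ⁅h i, x⁆ = c i • x := by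
  let H := LieSubalgebra.lieSpan K L (Set.range h)
  have hH : IsLieAbelian H := LieSubalgebra.isLieAbelian_lieSpan_iff.mpr (by simpa using hh)
  obtain ⟨χ, hχ⟩ := LieModule.exists_nontrivial_weightSpace_of_isSolvable K H M
  obtain ⟨⟨x, hx⟩, hx0⟩ := exists_ne (0 : LieModule.weightSpace M χ)
  exact ⟨fun i => χ ⟨h i, LieSubalgebra.subset_lieSpan ⟨i, rfl⟩⟩, x, by simpa using hx0,
    fun i => (LieModule.mem_weightSpace _ _).mp hx ⟨h i, LieSubalgebra.subset_lieSpan ⟨i, rfl⟩⟩⟩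

end WeightSpaces

/-! ### Integrable modules -/

section FiniteType

variable {ι : Type*} [Fintype ι] [DecidableEq ι]

/-- The properties of an indecomposable Cartan matrix of finite type on which the structure theory
of its Lie algebra rests; `exists_pos` replaces the invariant scalar product. -/
structure IsFiniteType (A : Matrix ι ι ℤ) : Prop where
  diag : ∀ i, A i i = 2
  det_ne_zero : A.det ≠ 0
  exists_pos : ∀ γ : ι → ℤ, 0 < γ → ∃ i, 0 < (A *ᵥ γ) i
  connected : ∀ s : Finset ι, s.Nonempty → (∀ j, ∀ i ∈ s, A i j ≠ 0 → j ∈ s) → s = Finset.univ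

variable {A : Matrix ι ι ℤ}

lemma IsFiniteType.mulVec_injective (hA : IsFiniteType A) :
    Function.Injective (A *ᵥ · : (ι → ℤ) → ι → ℤ) := fun γ δ hγδ => by
  refine sub_eq_zero.mp (Matrix.eq_zero_of_mulVec_eq_zero hA.det_ne_zero ?_)
  rw [mulVec_sub, sub_eq_zero]
  exact hγδ

lemma IsFiniteType.exists_sum_mul_ne_zero {K : Type*} [Field K] [CharZero K] (hA : IsFiniteType A)
    {c : ι → K} (hc : c ≠ 0) : ∃ j, ∑ i, c i * A i j ≠ 0 := by
  by_contra! h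
  refine hc (Matrix.eq_zero_of_vecMul_eq_zero (M := A.map (Int.castRingHom K)) ?_ (funext h))
  rw [← RingHom.mapMatrix_apply, ← RingHom.map_det]
  simpa using hA.det_ne_zero

end FiniteType

section Integrable

variable (K : Type*) {ι L : Type*} (M : Type*) [Field K] [LieRing L]
  [LieAlgebra K L] [AddCommGroup M] [Module K M] [LieRingModule L M] [LieModule K L M]

/-- The elements `e i` and `f i` act locally nilpotently on the module `M`. -/
def IsIntegrable (e f : ι → L) : Prop :=
  ∀ i x, (∃ n, (toEnd K L M (e i) ^ n) x = 0) ∧ ∃ n, (toEnd K L M (f i) ^ n) x = 0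

variable {K M} {A : Matrix ι ι ℤ} {h e f : ι → L}

lemma IsIntegrable.symm (hM : IsIntegrable K M e f) : IsIntegrable K M f e :=
  fun i x => (hM i x).symm

namespace IsChevalley

lemma h_mem_wtSpace (C : IsChevalley K A h e f) (i : ι) : h i ∈ wtSpace K L h 0 :=
  fun j => by simp [C.lie_h_h]

lemma e_mem_wtSpace (C : IsChevalley K A h e f) (i : ι) : e i ∈ wtSpace K L h (A.col i) :=
  fun j => C.lie_h_e j i

lemma f_mem_wtSpace (C : IsChevalley K A h e f) (i : ι) : f i ∈ wtSpace K L h (-A.col i) := by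
  rw [← wtSpace_neg]
  exact C.symm.e_mem_wtSpace i

lemma lie_e_mem_wtSpace (C : IsChevalley K A h e f) (i : ι) {l : ι → ℤ} {x : M}
    (hx : x ∈ wtSpace K M h l) : ⁅e i, x⁆ ∈ wtSpace K M h (l + A.col i) := by
  rw [add_comm]
  exact lie_mem_wtSpace (C.e_mem_wtSpace i) hx

lemma lie_f_mem_wtSpace (C : IsChevalley K A h e f) (i : ι) {l : ι → ℤ} {x : M}
    (hx : x ∈ wtSpace K M h l) : ⁅f i, x⁆ ∈ wtSpace K M h (l - A.col i) := by
  rw [sub_eq_neg_add]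
  exact lie_mem_wtSpace (C.f_mem_wtSpace i) hx

lemma pow_toEnd_e_mem_wtSpace (C : IsChevalley K A h e f) (i : ι) {l : ι → ℤ} {x : M}
    (hx : x ∈ wtSpace K M h l) (n : ℕ) :
    (toEnd K L M (e i) ^ n) x ∈ wtSpace K M h (l + n • A.col i) := by
  induction n with
  | zero => simpa using hx
  | succ n ih =>
    rw [pow_succ', succ_nsmul, ← add_assoc]
    exact C.lie_e_mem_wtSpace i ih

lemma pow_toEnd_f_mem_wtSpace (C : IsChevalley K A h e f) (i : ι) {l : ι → ℤ} {x : M}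
    (hx : x ∈ wtSpace K M h l) (n : ℕ) :
    (toEnd K L M (f i) ^ n) x ∈ wtSpace K M h (l - n • A.col i) := by
  rw [← neg_neg (l - _), ← wtSpace_neg, neg_sub, sub_eq_neg_add, add_comm]
  rw [← neg_neg l, ← wtSpace_neg] at hx
  simpa [add_comm] using C.symm.pow_toEnd_e_mem_wtSpace i hx n

lemma isIntegrable_self (C : IsChevalley K A h e f) : IsIntegrable K L e f := fun i x =>
  ⟨(LieSubalgebra.mem_engel_iff K (e i) x).mp (C.engel_e i ▸ trivial),
    (LieSubalgebra.mem_engel_iff K (f i) x).mp (C.engel_f i ▸ trivial)⟩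

lemma lie_mem_of_forall_mem (C : IsChevalley K A h e f) {U : Submodule K M}
    (he : ∀ i, ∀ y ∈ U, ⁅e i, y⁆ ∈ U) (hf : ∀ i, ∀ y ∈ U, ⁅f i, y⁆ ∈ U) (x : L) {y : M}
    (hy : y ∈ U) : ⁅x, y⁆ ∈ U := by
  let S : LieSubalgebra K L :=
    { carrier := {x | ∀ y ∈ U, ⁅x, y⁆ ∈ U}
      add_mem' := fun hx hy z hz => by rw [add_lie]; exact add_mem (hx z hz) (hy z hz)
      zero_mem' := fun z _ => by simp
      smul_mem' := fun c x hx z hz => by rw [smul_lie]; exact U.smul_mem _ (hx z hz)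
      lie_mem' := fun hx hy z hz => by
        rw [lie_lie]; exact sub_mem (hx _ (hy z hz)) (hy _ (hx z hz)) }
  exact C.mem_of_forall_mem (H := S) he hf x y hy

variable [Fintype ι] [DecidableEq ι]

lemma lie_f_mem_wtSpace_mulVec (C : IsChevalley K A h e f) (i : ι) {γ : ι → ℤ} {x : L}
    (hx : x ∈ wtSpace K L h (A *ᵥ γ)) :
    ⁅f i, x⁆ ∈ wtSpace K L h (A *ᵥ (γ - (1 : ℤ) • Pi.single i 1)) := by
  rw [one_smul, mulVec_sub, mulVec_single_one]
  exact C.lie_f_mem_wtSpace i hx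

lemma eq_top_of_h_mem [CharZero K] (C : IsChevalley K A h e f) (hA : IsFiniteType A)
    (J : LieIdeal K L) {i : ι} (hi : h i ∈ J) : J = ⊤ := by
  have hef (i j : ι) (hi : h i ∈ J) (hij : A i j ≠ 0) : e j ∈ J ∧ f j ∈ J := by
    have hA : (A i j : K) ≠ 0 := by exact_mod_cast hij
    have hej : (A i j : K) • e j ∈ J := by
      rw [Int.cast_smul_eq_zsmul, ← C.lie_h_e]
      exact lie_mem_left K L J _ _ hi
    have hfj : (A i j : K) • f j ∈ J := by
      rw [Int.cast_smul_eq_zsmul, ← neg_mem_iff, ← C.lie_h_f]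
      exact lie_mem_left K L J _ _ hi
    exact ⟨(J.toSubmodule.smul_mem_iff hA).mp hej, (J.toSubmodule.smul_mem_iff hA).mp hfj⟩
  classical
  have hall : Finset.univ.filter (h · ∈ J) = Finset.univ :=
    hA.connected _ ⟨i, by simpa using hi⟩ fun j i hi hij => by
      rw [Finset.mem_filter_univ] at hi ⊢
      rw [← C.lie_e_f j]
      exact lie_mem_left K L J _ _ (hef i j hi hij).1
  have hef' (j : ι) : e j ∈ J ∧ f j ∈ J :=
    hef j j (Finset.filter_eq_self.mp hall j (Finset.mem_univ j)) (by simp [hA.diag])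
  exact eq_top_iff.mpr fun x _ => C.mem_of_forall_mem (H := LieIdeal.toLieSubalgebra K L J)
    (fun j => (hef' j).1) (fun j => (hef' j).2) x

variable [CharZero K] [Nontrivial L]

lemma h_ne_zero (C : IsChevalley K A h e f) (hA : IsFiniteType A) (i : ι) : h i ≠ 0 :=
  fun hi => bot_ne_top (α := LieIdeal K L) (C.eq_top_of_h_mem hA ⊥ (i := i) (by simp [hi]))

lemma sl2 (C : IsChevalley K A h e f) (hA : IsFiniteType A) (i : ι) :
    IsSl2Triple (h i) (e i) (f i) where
  h_ne_zero := C.h_ne_zero hA i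
  lie_e_f := C.lie_e_f i
  lie_h_e_nsmul := by rw [C.lie_h_e, hA.diag]; exact ofNat_zsmul _ _
  lie_h_f_nsmul := by rw [C.lie_h_f, hA.diag]; exact congrArg _ (ofNat_zsmul _ _)

lemma isIntegrable [FiniteDimensional K M] (C : IsChevalley K A h e f) (hA : IsFiniteType A) :
    IsIntegrable K M e f := fun i x => by
  obtain ⟨m, hm⟩ := isNilpotent_toEnd_e (K := K) (M := M) (C.sl2 hA i)
  obtain ⟨n, hn⟩ := isNilpotent_toEnd_e (K := K) (M := M) (C.sl2 hA i).symm
  exact ⟨⟨m, by simp [hm]⟩, n, by simp [hn]⟩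

lemma lie_f_ne_zero (C : IsChevalley K A h e f) (hA : IsFiniteType A) (hM : IsIntegrable K M e f)
    {l : ι → ℤ} {x : M} (hx0 : x ≠ 0) (hx : x ∈ wtSpace K M h l) {i : ι} (hi : 0 < l i) :
    ⁅f i, x⁆ ≠ 0 :=
  lie_f_ne_zero_of_pos (C.sl2 hA i) hx0 (hx i) hi (hM i x).1

lemma lie_e_ne_zero (C : IsChevalley K A h e f) (hA : IsFiniteType A) (hM : IsIntegrable K M e f)
    {l : ι → ℤ} {x : M} (hx0 : x ≠ 0) (hx : x ∈ wtSpace K M h l) {i : ι} (hi : l i < 0) :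
    ⁅e i, x⁆ ≠ 0 := by
  rw [← neg_neg l, ← wtSpace_neg] at hx
  exact C.symm.lie_f_ne_zero hA hM.symm hx0 hx (by simpa using hi)

lemma pow_toEnd_e_ne_zero (C : IsChevalley K A h e f) (hA : IsFiniteType A) {l : ι → ℤ} {x : M}
    (hx0 : x ≠ 0) (hx : x ∈ wtSpace K M h l) {i : ι} {n : ℕ} (hi : l i = -n)
    (hfx : ⁅f i, x⁆ = 0) : (toEnd K L M (e i) ^ n) x ≠ 0 := by
  have P : (C.sl2 hA i).symm.HasPrimitiveVectorWith x (n : K) :=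
    ⟨hx0, by rw [neg_lie, hx i, hi, neg_zsmul, neg_neg, natCast_zsmul, Nat.cast_smul_eq_nsmul], hfx⟩
  exact P.pow_toEnd_f_ne_zero_of_eq_nat rfl le_rfl

lemma wtSpace_sub_ne_bot_of_nonneg (C : IsChevalley K A h e f) (hA : IsFiniteType A)
    (hM : IsIntegrable K M e f) {l : ι → ℤ} (hl : wtSpace K M h l ≠ ⊥) {i : ι} (hi : 0 ≤ l i) :
    wtSpace K M h (l - l i • A.col i) ≠ ⊥ := by
  obtain ⟨x, hx, hx0⟩ := Submodule.exists_mem_ne_zero_of_ne_bot hl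
  lift l i to ℕ using hi with n hn
  obtain ⟨k, hk⟩ := exists_pow_f_pow_e_ne_zero (K := K) (n := n) (C.sl2 hA i) hx0
    (by rw [hx i, ← hn, natCast_zsmul, Nat.cast_smul_eq_nsmul]) (hM i x).1
  refine (Submodule.ne_bot_iff _).mpr ⟨_, ?_, hk⟩
  convert C.pow_toEnd_f_mem_wtSpace i (C.pow_toEnd_e_mem_wtSpace i hx k) (n + k) using 2
  simp [add_smul, sub_eq_add_neg]

lemma wtSpace_sub_ne_bot (C : IsChevalley K A h e f) (hA : IsFiniteType A)
    (hM : IsIntegrable K M e f) {l : ι → ℤ} (hl : wtSpace K M h l ≠ ⊥) (i : ι) :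
    wtSpace K M h (l - l i • A.col i) ≠ ⊥ := by
  obtain hi | hi := le_or_gt 0 (l i)
  · exact C.wtSpace_sub_ne_bot_of_nonneg hA hM hl hi
  · rw [← neg_neg l, ← wtSpace_neg] at hl
    have := C.symm.wtSpace_sub_ne_bot_of_nonneg hA hM.symm hl (i := i) (by simpa using hi.le)
    rw [wtSpace_neg] at this
    simpa [sub_eq_add_neg, add_comm] using this

lemma exists_mem_wtSpace [IsAlgClosed K] [FiniteDimensional K M] [Nontrivial M]
    (C : IsChevalley K A h e f) (hA : IsFiniteType A) :
    ∃ (l : ι → ℤ) (x : M), x ≠ 0 ∧ x ∈ wtSpace K M h l := by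
  obtain ⟨c, x, hx0, hx⟩ := exists_forall_lie_eq_smul (K := K) (M := M) C.lie_h_h
  choose l hl using fun i => exists_int_of_lie_eq_smul (C.sl2 hA i) hx0 (hx i)
  exact ⟨l, x, hx0, fun i => by rw [hx i, hl i, Int.cast_smul_eq_zsmul]⟩

lemma linearIndependent_h (C : IsChevalley K A h e f) (hA : IsFiniteType A) :
    LinearIndependent K h := by
  rw [Fintype.linearIndependent_iff]
  intro c hc
  by_contra! hne
  obtain ⟨j, hj⟩ := hA.exists_sum_mul_ne_zero (c := c) fun h0 => by simp [h0] at hne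
  have := congr(⁅$hc, e j⁆)
  simp only [sum_lie, smul_lie, C.lie_h_e, zero_lie, ← Int.cast_smul_eq_zsmul K, smul_smul,
    ← Finset.sum_smul, smul_eq_zero, hj, false_or] at this
  exact (C.sl2 hA j).e_ne_zero this

end IsChevalley

end Integrable

/-! ### Triangular decomposition -/

section Words

variable {K ι L : Type*} [Field K] [LieRing L] [LieAlgebra K L] [DecidableEq ι]

/-- `Word e γ x` says that `x` is a right-normed bracket of the `e i` in which `e i` occurs `γ i`
times. -/
inductive Word (e : ι → L) : (ι → ℤ) → L → Prop
  | base (i : ι) : Word e (Pi.single i 1) (e i)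
  | step (i : ι) {γ : ι → ℤ} {x : L} : Word e γ x → Word e (γ + Pi.single i 1) ⁅e i, x⁆

/-- The words in the `e i`, the words in the `f i`, and the `h i`: a homogeneous spanning set. -/
def triangularSet (h e f : ι → L) : Set L :=
  {x | ∃ γ, Word e γ x} ∪ {x | ∃ γ, Word f γ x} ∪ Set.range h

variable {A : Matrix ι ι ℤ} {h e f : ι → L} {γ : ι → ℤ} {x : L}

lemma Word.pos (hw : Word e γ x) : 0 < γ := by
  induction hw with
  | base j => exact Pi.single_pos.mpr one_pos
  | step j _ ih => exact add_pos ih (Pi.single_pos.mpr one_pos)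

lemma Word.eq_of_support (hw : Word e γ x) (hx : x ≠ 0) {i : ι} (hγ : ∀ j ≠ i, γ j = 0) :
    γ = Pi.single i 1 ∧ x = e i := by
  induction hw with
  | base j =>
    obtain rfl : j = i := by
      by_contra hji
      simpa using hγ j hji
    exact ⟨rfl, rfl⟩
  | @step j γ x hw ih =>
    have hγ0 (k : ι) (hk : k ≠ i) : 0 = γ k ∧ 0 = (Pi.single j 1 : ι → ℤ) k :=
      (add_eq_zero_iff_of_nonneg (hw.pos.le k) ((Word.base (e := e) j).pos.le k)).mp
        (hγ k hk) |>.imp Eq.symm Eq.symm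
    obtain rfl : j = i := by
      by_contra hji
      simpa using (hγ0 j hji).2
    have hx0 : x ≠ 0 := by
      rintro rfl
      simp at hx
    simp [(ih hx0 fun k hk => (hγ0 k hk).1.symm).2] at hx

lemma Word.mem_wtSpace [Fintype ι] (C : IsChevalley K A h e f) (hw : Word e γ x) :
    x ∈ wtSpace K L h (A *ᵥ γ) := by
  induction hw with
  | base j => rw [mulVec_single_one]; exact C.e_mem_wtSpace j
  | step j _ ih =>
    rw [mulVec_add, mulVec_single_one]
    exact C.lie_e_mem_wtSpace j ih

lemma Word.lie_f_mem_span [Finite ι] (C : IsChevalley K A h e f) (i : ι) (hw : Word e γ x) :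
    ⁅f i, x⁆ ∈ Submodule.span K ({x | ∃ γ, Word e γ x} ∪ Set.range h) := by
  cases nonempty_fintype ι
  have hfe (j : ι) : ⁅f i, e j⁆ = if i = j then -h i else 0 := by
    split_ifs with hij
    · rw [← hij, ← lie_skew, C.lie_e_f]
    · rw [← lie_skew, C.lie_e_f_of_ne j i (Ne.symm hij), neg_zero]
  have hspan (j : ι) : Submodule.span K ({x | ∃ γ, Word e γ x} ∪ Set.range h) ≤
      (Submodule.span K ({x | ∃ γ, Word e γ x} ∪ Set.range h)).comap (toEnd K L L (e j)) := by
    rw [Submodule.span_le]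
    rintro y (⟨γ, hy⟩ | ⟨k, rfl⟩)
    · exact Submodule.subset_span (Or.inl ⟨_, hy.step j⟩)
    · rw [SetLike.mem_coe, Submodule.mem_comap, toEnd_apply_apply, ← lie_skew, C.lie_h_e]
      refine neg_mem (zsmul_mem (Submodule.subset_span ?_) _)
      exact Or.inl ⟨_, Word.base j⟩
  induction hw with
  | base j =>
    rw [hfe]
    split_ifs
    · exact neg_mem (Submodule.subset_span (Or.inr ⟨i, rfl⟩))
    · exact zero_mem _
  | @step j γ x hw ih =>
    rw [leibniz_lie, hfe]
    refine add_mem ?_ (hspan j ih)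
    split_ifs
    · rw [neg_lie, hw.mem_wtSpace C i]
      refine neg_mem (zsmul_mem (Submodule.subset_span ?_) _)
      exact Or.inl ⟨_, hw⟩
    · simp

lemma span_triangularSet_symm :
    Submodule.span K (triangularSet (-h) f e) = Submodule.span K (triangularSet h e f) := by
  have hneg : Set.range (-h) = -Set.range h := by
    ext x
    simp [neg_eq_iff_eq_neg]
  simp only [triangularSet, Submodule.span_union, hneg, Submodule.span_neg]
  rw [sup_comm (Submodule.span K {x | ∃ γ, Word f γ x})]

lemma lie_f_mem_span_triangularSet [Finite ι] (C : IsChevalley K A h e f) (i : ι)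
    (hx : x ∈ Submodule.span K (triangularSet h e f)) :
    ⁅f i, x⁆ ∈ Submodule.span K (triangularSet h e f) := by
  suffices Submodule.span K (triangularSet h e f) ≤
      (Submodule.span K (triangularSet h e f)).comap (toEnd K L L (f i)) from this hx
  rw [Submodule.span_le]
  rintro y ((⟨γ, hy⟩ | ⟨γ, hy⟩) | ⟨k, rfl⟩)
  · refine Submodule.span_mono ?_ (hy.lie_f_mem_span C i)
    exact Set.union_subset_union_left _ Set.subset_union_left
  · exact Submodule.subset_span (Or.inl (Or.inr ⟨_, hy.step i⟩))
  · rw [SetLike.mem_coe, Submodule.mem_comap, toEnd_apply_apply, ← lie_skew, C.lie_h_f, neg_neg]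
    refine zsmul_mem (Submodule.subset_span ?_) _
    exact Or.inl (Or.inr ⟨_, Word.base i⟩)

lemma span_triangularSet [Finite ι] (C : IsChevalley K A h e f) :
    Submodule.span K (triangularSet h e f) = ⊤ := by
  have hlie (x : L) {y : L} : y ∈ Submodule.span K (triangularSet h e f) →
      ⁅x, y⁆ ∈ Submodule.span K (triangularSet h e f) := by
    refine C.lie_mem_of_forall_mem (fun i y hy => ?_)
      (fun i y hy => lie_f_mem_span_triangularSet C i hy) x
    rw [← span_triangularSet_symm] at hy ⊢
    exact lie_f_mem_span_triangularSet C.symm i hy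
  let H : LieSubalgebra K L :=
    { Submodule.span K (triangularSet h e f) with lie_mem' := fun {x _} _ hy => hlie x hy }
  exact eq_top_iff.mpr fun x _ => C.mem_of_forall_mem (H := H)
    (fun i => Submodule.subset_span (Or.inl (Or.inl ⟨_, Word.base i⟩)))
    (fun i => Submodule.subset_span (Or.inl (Or.inr ⟨_, Word.base i⟩))) x

end Words

section Roots

@[elab_as_elim]
lemma pos_induction {ι : Type*} [Finite ι] {P : ∀ γ : ι → ℤ, 0 < γ → Prop}
    (ih : ∀ γ hγ, (∀ δ hδ, δ < γ → P δ hδ) → P γ hγ) (γ : ι → ℤ) (hγ : 0 < γ) : P γ hγ := by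
  cases nonempty_fintype ι
  induction hn : (∑ i, γ i).toNat using Nat.strong_induction_on generalizing γ with
  | _ n IH =>
    refine ih γ hγ fun δ hδ hδγ => IH _ ?_ δ hδ rfl
    have hpos : 0 < ∑ i, δ i := Fintype.sum_pos hδ
    have hlt : ∑ i, δ i < ∑ i, γ i := Fintype.sum_strictMono hδγ
    omega

variable {K ι L : Type*} [Field K] [CharZero K] [LieRing L] [LieAlgebra K L]
  [DecidableEq ι] {A : Matrix ι ι ℤ} {h e f : ι → L}

namespace IsChevalley

lemma mem_span_triangularSet_inter [Finite ι] (C : IsChevalley K A h e f) {l : ι → ℤ} {x : L}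
    (hx : x ∈ wtSpace K L h l) :
    x ∈ Submodule.span K (triangularSet h e f ∩ wtSpace K L h l) := by
  cases nonempty_fintype ι
  refine mem_span_inter_wtSpace C.lie_h_h (fun y hy => ?_) hx (by simp [span_triangularSet C])
  rcases hy with (⟨γ, hw⟩ | ⟨γ, hw⟩) | ⟨k, rfl⟩
  · exact ⟨_, hw.mem_wtSpace C⟩
  · exact ⟨_, (wtSpace_neg (K := K) (M := L) (h := h)).le (hw.mem_wtSpace C.symm)⟩
  · exact ⟨_, C.h_mem_wtSpace k⟩

variable [Fintype ι]

lemma cases_of_mem_triangularSet (C : IsChevalley K A h e f) {l : ι → ℤ} {x : L}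
    (hx0 : x ≠ 0) (hx : x ∈ triangularSet h e f) (hl : x ∈ wtSpace K L h l) :
    (∃ γ, Word e γ x ∧ l = A *ᵥ γ) ∨ (∃ γ, Word f γ x ∧ l = A *ᵥ -γ) ∨
      (x ∈ Set.range h ∧ l = A *ᵥ 0) := by
  have huniq {m : ι → ℤ} (hm : x ∈ wtSpace K L h m) : l = m := eq_of_mem_wtSpace C.lie_h_h hx0 hl hm
  rcases hx with (⟨γ, hw⟩ | ⟨γ, hw⟩) | ⟨k, rfl⟩
  · exact Or.inl ⟨γ, hw, huniq (hw.mem_wtSpace C)⟩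
  · have := hw.mem_wtSpace C.symm
    rw [wtSpace_neg, ← mulVec_neg] at this
    exact Or.inr (Or.inl ⟨γ, hw, huniq this⟩)
  · exact Or.inr (Or.inr ⟨⟨k, rfl⟩, by rw [mulVec_zero]; exact huniq (C.h_mem_wtSpace k)⟩)

lemma exists_eq_mulVec_of_wtSpace_ne_bot (C : IsChevalley K A h e f) {l : ι → ℤ}
    (hl : wtSpace K L h l ≠ ⊥) : ∃ γ, l = A *ᵥ γ ∧ (γ = 0 ∨ 0 < γ ∨ γ < 0) := by
  obtain ⟨y, ⟨hy, hyl⟩, hy0⟩ : ∃ y ∈ triangularSet h e f ∩ wtSpace K L h l, y ≠ 0 := by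
    by_contra! hall
    refine hl (eq_bot_iff.mpr fun x hx => ?_)
    rw [← Submodule.span_eq_bot.mpr hall]
    exact C.mem_span_triangularSet_inter hx
  rcases C.cases_of_mem_triangularSet hy0 hy hyl with ⟨γ, hw, rfl⟩ | ⟨γ, hw, rfl⟩ | ⟨-, rfl⟩
  · exact ⟨γ, rfl, Or.inr (Or.inl hw.pos)⟩
  · exact ⟨-γ, rfl, Or.inr (Or.inr (neg_neg_of_pos hw.pos))⟩
  · exact ⟨0, rfl, Or.inl rfl⟩

lemma wtSpace_mulVec_le_span_word (C : IsChevalley K A h e f) (hA : IsFiniteType A) {γ : ι → ℤ}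
    (hγ : 0 < γ) : wtSpace K L h (A *ᵥ γ) ≤ Submodule.span K {x | Word e γ x} := by
  refine fun x hx => Submodule.span_le.mpr ?_ (C.mem_span_triangularSet_inter hx)
  rintro y ⟨hy, hyl⟩
  by_cases hy0 : y = 0
  · exact hy0 ▸ zero_mem _
  rcases C.cases_of_mem_triangularSet hy0 hy hyl with ⟨δ, hw, h0⟩ | ⟨δ, hw, h0⟩ | ⟨-, h0⟩
  · exact Submodule.subset_span (hA.mulVec_injective h0 ▸ hw)
  · have := neg_neg_of_pos hw.pos
    rw [← hA.mulVec_injective h0] at this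
    exact absurd this hγ.asymm
  · exact absurd (hA.mulVec_injective h0) hγ.ne'

lemma wtSpace_zero_le_span_h (C : IsChevalley K A h e f) (hA : IsFiniteType A) :
    wtSpace K L h 0 ≤ Submodule.span K (Set.range h) := by
  refine fun x hx => Submodule.span_le.mpr ?_ (C.mem_span_triangularSet_inter hx)
  rintro y ⟨hy, hyl⟩
  by_cases hy0 : y = 0
  · exact hy0 ▸ zero_mem _
  rw [← mulVec_zero A] at hyl
  rcases C.cases_of_mem_triangularSet hy0 hy hyl with ⟨δ, hw, h0⟩ | ⟨δ, hw, h0⟩ | ⟨hr, -⟩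
  · exact absurd (hA.mulVec_injective h0).symm hw.pos.ne'
  · exact absurd (neg_eq_zero.mp (hA.mulVec_injective h0).symm) hw.pos.ne'
  · exact Submodule.subset_span hr

lemma mem_span_e_of_support (C : IsChevalley K A h e f) (hA : IsFiniteType A) {γ : ι → ℤ}
    (hγ : 0 < γ) {i : ι} (hi : ∀ j ≠ i, γ j = 0) {x : L} (hx : x ∈ wtSpace K L h (A *ᵥ γ)) :
    x ∈ Submodule.span K {e i} := by
  refine Submodule.span_le.mpr (fun y hy => ?_) (C.wtSpace_mulVec_le_span_word hA hγ hx)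
  by_cases hy0 : y = 0
  · exact hy0 ▸ zero_mem _
  · exact (Word.eq_of_support hy hy0 hi).2 ▸ Submodule.mem_span_singleton_self _

lemma eq_single_of_support (C : IsChevalley K A h e f) (hA : IsFiniteType A) {γ : ι → ℤ}
    (hγ : 0 < γ) {i : ι} (hi : ∀ j ≠ i, γ j = 0) (hne : wtSpace K L h (A *ᵥ γ) ≠ ⊥) :
    γ = Pi.single i 1 := by
  obtain ⟨y, hy, hy0⟩ : ∃ y, Word e γ y ∧ y ≠ 0 := by
    by_contra! hall
    refine hne (eq_bot_iff.mpr ?_)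
    rw [← Submodule.span_eq_bot.mpr hall]
    exact C.wtSpace_mulVec_le_span_word hA hγ
  exact (hy.eq_of_support hy0 hi).1

lemma eq_single_or_sub_smul_single_pos (C : IsChevalley K A h e f) (hA : IsFiniteType A)
    {γ : ι → ℤ} (hγ : 0 < γ) {i : ι} {k : ℤ} (hne : wtSpace K L h (A *ᵥ γ) ≠ ⊥)
    (hne' : wtSpace K L h (A *ᵥ (γ - k • Pi.single i 1)) ≠ ⊥) :
    γ = Pi.single i 1 ∨ 0 < γ - k • Pi.single i 1 := by
  by_cases hi : ∀ j ≠ i, γ j = 0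
  · exact Or.inl (C.eq_single_of_support hA hγ hi hne)
  · push Not at hi
    obtain ⟨j, hji, hj⟩ := hi
    have hpos : 0 < (γ - k • Pi.single i 1 : ι → ℤ) j := by
      simpa [hji] using (hγ.le j).lt_of_ne' hj
    obtain ⟨δ, hδ, hcases⟩ := C.exists_eq_mulVec_of_wtSpace_ne_bot hne'
    rw [hA.mulVec_injective hδ] at hpos ⊢
    rcases hcases with rfl | hδ | hδ
    · exact absurd hpos (lt_irrefl _)
    · exact Or.inr hδ
    · exact absurd (hδ.le j) hpos.not_ge

end IsChevalley

end Roots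

/-! ### Root spaces and simplicity -/

section RootSpaces

variable {K ι L : Type*} [Field K] [CharZero K] [LieRing L] [LieAlgebra K L]
  [Fintype ι] [DecidableEq ι] {A : Matrix ι ι ℤ} {h e f : ι → L}

namespace IsChevalley

lemma exists_e_mem_of_mem_wtSpace_zero (C : IsChevalley K A h e f) (hA : IsFiniteType A)
    (J : LieIdeal K L) {x : L} (hxJ : x ∈ J) (hx0 : x ≠ 0) (hx : x ∈ wtSpace K L h 0) :
    ∃ i, e i ∈ J := by
  obtain ⟨c, rfl⟩ := (Submodule.mem_span_range_iff_exists_fun K).mp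
    (C.wtSpace_zero_le_span_h hA hx)
  obtain ⟨j, hj⟩ := hA.exists_sum_mul_ne_zero (c := c) (by rintro rfl; simp at hx0)
  have hej : ⁅∑ i, c i • h i, e j⁆ = (∑ i, c i * A i j) • e j := by
    simp only [sum_lie, smul_lie, C.lie_h_e, ← Int.cast_smul_eq_zsmul K, smul_smul, Finset.sum_smul]
  have : ⁅∑ i, c i • h i, e j⁆ ∈ J := lie_mem_left K L J _ _ hxJ
  rw [hej] at this
  exact ⟨j, (J.toSubmodule.smul_mem_iff hj).mp this⟩

variable [Nontrivial L]

lemma exists_forall_lie_f_ne_zero (C : IsChevalley K A h e f) (hA : IsFiniteType A) {γ : ι → ℤ}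
    (hγ : 0 < γ) (hne : wtSpace K L h (A *ᵥ γ) ≠ ⊥) :
    ∃ i, (γ = Pi.single i 1 ∨ 0 < γ - (1 : ℤ) • Pi.single i 1) ∧
      ∀ x ∈ wtSpace K L h (A *ᵥ γ), x ≠ 0 → ⁅f i, x⁆ ≠ 0 := by
  obtain ⟨i, hi⟩ := hA.exists_pos γ hγ
  have hf (x : L) (hx : x ∈ wtSpace K L h (A *ᵥ γ)) (hx0 : x ≠ 0) : ⁅f i, x⁆ ≠ 0 :=
    C.lie_f_ne_zero hA C.isIntegrable_self hx0 hx hi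
  obtain ⟨x, hx, hx0⟩ := Submodule.exists_mem_ne_zero_of_ne_bot hne
  exact ⟨i, C.eq_single_or_sub_smul_single_pos hA hγ hne ((Submodule.ne_bot_iff _).mpr
    ⟨_, C.lie_f_mem_wtSpace_mulVec i hx, hf x hx hx0⟩), hf⟩

lemma exists_eq_smul_of_mem_wtSpace (C : IsChevalley K A h e f) (hA : IsFiniteType A) {γ : ι → ℤ}
    (hγ : 0 < γ) {x y : L} (hx0 : x ≠ 0) (hx : x ∈ wtSpace K L h (A *ᵥ γ))
    (hy : y ∈ wtSpace K L h (A *ᵥ γ)) : ∃ c : K, y = c • x := by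
  induction γ, hγ using pos_induction generalizing x y with
  | _ γ hγ ih =>
    obtain ⟨i, rfl | hi, hf⟩ :=
      C.exists_forall_lie_f_ne_zero hA hγ ((Submodule.ne_bot_iff _).mpr ⟨x, hx, hx0⟩)
    · have hsupp (j : ι) (hj : j ≠ i) : (Pi.single i 1 : ι → ℤ) j = 0 := Pi.single_eq_of_ne hj 1
      obtain ⟨a, rfl⟩ := Submodule.mem_span_singleton.mp (C.mem_span_e_of_support hA hγ hsupp hx)
      obtain ⟨b, rfl⟩ := Submodule.mem_span_singleton.mp (C.mem_span_e_of_support hA hγ hsupp hy)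
      exact ⟨b / a, by rw [smul_smul, div_mul_cancel₀ b (left_ne_zero_of_smul hx0)]⟩
    · have hlt : γ - (1 : ℤ) • Pi.single i 1 < γ := by simp
      obtain ⟨c, hc⟩ := ih _ hi hlt (hf x hx hx0) (C.lie_f_mem_wtSpace_mulVec i hx)
        (C.lie_f_mem_wtSpace_mulVec i hy)
      refine ⟨c, sub_eq_zero.mp ?_⟩
      by_contra hne
      refine hf _ (sub_mem hy (Submodule.smul_mem _ c hx)) hne ?_
      rw [lie_sub, lie_smul, hc, sub_self]

lemma exists_wtSpace_le_span_singleton (C : IsChevalley K A h e f) (hA : IsFiniteType A)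
    {γ : ι → ℤ} (hγ : 0 < γ) : ∃ v, wtSpace K L h (A *ᵥ γ) ≤ Submodule.span K {v} := by
  by_cases hne : wtSpace K L h (A *ᵥ γ) = ⊥
  · exact ⟨0, hne ▸ bot_le⟩
  · obtain ⟨x, hx, hx0⟩ := Submodule.exists_mem_ne_zero_of_ne_bot hne
    refine ⟨x, fun y hy => ?_⟩
    obtain ⟨c, rfl⟩ := C.exists_eq_smul_of_mem_wtSpace hA hγ hx0 hx hy
    exact Submodule.smul_mem _ c (Submodule.mem_span_singleton_self x)

lemma mem_of_wtSpace_mulVec_ne_bot (C : IsChevalley K A h e f) (hA : IsFiniteType A)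
    {R : Set (ι → ℤ)} (hsingle : ∀ i, Pi.single i 1 ∈ R)
    (hrefl : ∀ γ ∈ R, ∀ i, (A *ᵥ γ) i < 0 → γ - (A *ᵥ γ) i • Pi.single i 1 ∈ R) {γ : ι → ℤ}
    (hγ : 0 < γ) (hne : wtSpace K L h (A *ᵥ γ) ≠ ⊥) : γ ∈ R := by
  induction γ, hγ using pos_induction with
  | _ γ hγ ih =>
    obtain ⟨i, hi⟩ := hA.exists_pos γ hγ
    set δ := γ - (A *ᵥ γ) i • Pi.single i 1 with hδ
    have hAδ : A *ᵥ δ = A *ᵥ γ - (A *ᵥ γ) i • A.col i := by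
      rw [hδ, mulVec_sub, mulVec_smul, mulVec_single_one]
    have hδi : (A *ᵥ δ) i = -(A *ᵥ γ) i := by
      simp only [hAδ, Pi.sub_apply, Pi.smul_apply, col_apply, hA.diag, smul_eq_mul]
      ring
    have hne' : wtSpace K L h (A *ᵥ δ) ≠ ⊥ := by
      rw [hAδ]
      exact C.wtSpace_sub_ne_bot hA C.isIntegrable_self hne i
    obtain rfl | hpos := C.eq_single_or_sub_smul_single_pos hA hγ hne hne'
    · exact hsingle i
    · have hlt : δ < γ := sub_lt_self _ (smul_pos hi (Pi.single_pos.mpr one_pos))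
      have := hrefl δ (ih δ hpos hlt hne') i (by omega)
      rwa [hδi, neg_smul, sub_neg_eq_add, hδ, sub_add_cancel] at this

/-- `L` is spanned by the `h i` and one vector for each element of `R` and of `-R`. -/
theorem finite_and_finrank_le (C : IsChevalley K A h e f) (hA : IsFiniteType A)
    (R : Finset (ι → ℤ)) (hpos : ∀ γ ∈ R, 0 < γ) (hsingle : ∀ i, Pi.single i 1 ∈ R)
    (hrefl : ∀ γ ∈ R, ∀ i, (A *ᵥ γ) i < 0 → γ - (A *ᵥ γ) i • Pi.single i 1 ∈ R) :
    FiniteDimensional K L ∧ finrank K L ≤ Fintype.card ι + (R.card + R.card) := by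
  choose v hv using fun γ : R => C.exists_wtSpace_le_span_singleton hA (hpos γ γ.2)
  choose w hw using fun γ : R => C.symm.exists_wtSpace_le_span_singleton hA (hpos γ γ.2)
  let b : ι ⊕ R ⊕ R → L := Sum.elim h (Sum.elim v w)
  have hb : Submodule.span K (Set.range b) = ⊤ := by
    rw [eq_top_iff, ← span_triangularSet C, Submodule.span_le]
    have hword {e' f' h' : ι → L} (C' : IsChevalley K A h' e' f') {u : R → L}
        (hu : ∀ γ : R, wtSpace K L h' (A *ᵥ γ) ≤ Submodule.span K {u γ})
        (hub : Set.range u ⊆ Set.range b) {γ : ι → ℤ} {x : L} (hx : Word e' γ x) :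
        x ∈ Submodule.span K (Set.range b) := by
      by_cases hx0 : x = 0
      · exact hx0 ▸ zero_mem _
      have hxγ := hx.mem_wtSpace C'
      have hγ := C'.mem_of_wtSpace_mulVec_ne_bot hA (R := R) hsingle hrefl hx.pos
        ((Submodule.ne_bot_iff _).mpr ⟨x, hxγ, hx0⟩)
      exact Submodule.span_mono (Set.singleton_subset_iff.mpr (hub ⟨⟨γ, hγ⟩, rfl⟩)) (hu ⟨γ, hγ⟩ hxγ)
    rintro x ((⟨γ, hx⟩ | ⟨γ, hx⟩) | ⟨i, rfl⟩)
    · exact hword C hv (by rintro _ ⟨γ, rfl⟩; exact ⟨.inr (.inl γ), rfl⟩) hx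
    · exact hword C.symm hw (by rintro _ ⟨γ, rfl⟩; exact ⟨.inr (.inr γ), rfl⟩) hx
    · exact Submodule.subset_span ⟨.inl i, rfl⟩
  refine ⟨⟨Submodule.fg_def.mpr ⟨_, Set.finite_range b, hb⟩⟩, ?_⟩
  rw [← finrank_top, ← hb]
  exact (finrank_range_le_card b).trans_eq (by simp)

lemma exists_e_mem (C : IsChevalley K A h e f) (hA : IsFiniteType A) (J : LieIdeal K L)
    {γ : ι → ℤ} (hγ : 0 < γ) {x : L} (hxJ : x ∈ J) (hx0 : x ≠ 0)
    (hx : x ∈ wtSpace K L h (A *ᵥ γ)) : ∃ i, e i ∈ J := by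
  induction γ, hγ using pos_induction generalizing x with
  | _ γ hγ ih =>
    obtain ⟨i, rfl | hi, hf⟩ :=
      C.exists_forall_lie_f_ne_zero hA hγ ((Submodule.ne_bot_iff _).mpr ⟨x, hx, hx0⟩)
    · obtain ⟨a, rfl⟩ := Submodule.mem_span_singleton.mp
        (C.mem_span_e_of_support hA hγ (fun j hj => Pi.single_eq_of_ne hj 1) hx)
      exact ⟨i, (J.toSubmodule.smul_mem_iff (left_ne_zero_of_smul hx0)).mp hxJ⟩
    · exact ih _ hi (by simp) (J.lie_mem hxJ) (hf x hx hx0) (C.lie_f_mem_wtSpace_mulVec i hx)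

variable [IsAlgClosed K] [FiniteDimensional K L]

lemma eq_top_of_ne_bot (C : IsChevalley K A h e f) (hA : IsFiniteType A) {J : LieIdeal K L}
    (hJ : J ≠ ⊥) : J = ⊤ := by
  have : Nontrivial J := (LieSubmodule.nontrivial_iff_ne_bot K L L).mpr hJ
  obtain ⟨l, ⟨x, hxJ⟩, hx0, hx⟩ := C.exists_mem_wtSpace (M := J) hA
  replace hx : x ∈ wtSpace K L h l := fun i => congr(($(hx i) : L))
  replace hx0 : x ≠ 0 := by simpa using hx0
  obtain ⟨γ, rfl, rfl | hγ | hγ⟩ := C.exists_eq_mulVec_of_wtSpace_ne_bot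
    ((Submodule.ne_bot_iff _).mpr ⟨x, hx, hx0⟩)
  · rw [mulVec_zero] at hx
    obtain ⟨i, hi⟩ := C.exists_e_mem_of_mem_wtSpace_zero hA J hxJ hx0 hx
    exact C.eq_top_of_h_mem hA J (i := i) (C.lie_e_f i ▸ lie_mem_left K L J _ _ hi)
  · obtain ⟨i, hi⟩ := C.exists_e_mem hA J hγ hxJ hx0 hx
    exact C.eq_top_of_h_mem hA J (i := i) (C.lie_e_f i ▸ lie_mem_left K L J _ _ hi)
  · rw [← neg_neg (A *ᵥ γ), ← mulVec_neg, ← wtSpace_neg] at hx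
    obtain ⟨i, hi⟩ := C.symm.exists_e_mem hA J (neg_pos.mpr hγ) hxJ hx0 hx
    exact C.eq_top_of_h_mem hA J (i := i) (C.lie_e_f i ▸ J.lie_mem hi)

theorem isSimple [Nonempty ι] (C : IsChevalley K A h e f) (hA : IsFiniteType A) :
    LieAlgebra.IsSimple K L where
  eq_bot_or_eq_top J := or_iff_not_imp_left.mpr (C.eq_top_of_ne_bot hA)
  non_abelian hab := by
    obtain ⟨i⟩ := ‹Nonempty ι›
    exact C.h_ne_zero hA i (C.lie_e_f i ▸ hab.trivial _ _)

end IsChevalley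

end RootSpaces

/-! ### The Lie algebra `E₆` -/

section E6

open CartanMatrix

lemma mulVec_E₆ (γ : Fin 6 → ℤ) : E₆ *ᵥ γ =
    ![2 * γ 0 - γ 2, 2 * γ 1 - γ 3, -γ 0 + 2 * γ 2 - γ 3, -γ 1 - γ 2 + 2 * γ 3 - γ 4,
      -γ 3 + 2 * γ 4 - γ 5, -γ 4 + 2 * γ 5] := by
  ext i
  fin_cases i <;> simp [E₆, mulVec, dotProduct, Fin.sum_univ_succ] <;> ring

lemma isFiniteType_E₆ : IsFiniteType E₆ where
  diag := by decide
  det_ne_zero hdet := by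
    obtain ⟨γ, hγ, h0⟩ := exists_mulVec_eq_zero_iff.mpr hdet
    clear hdet
    refine hγ (funext fun i => ?_)
    simp only [mulVec_E₆, funext_iff, Fin.forall_fin_succ] at h0
    fin_cases i <;> simp at h0 ⊢ <;> omega
  exists_pos γ hγ := by
    by_contra! hall
    refine hγ.ne' (funext fun i => ?_)
    have hle := hγ.le
    simp only [mulVec_E₆, Fin.forall_fin_succ, Pi.le_def] at hall hle
    fin_cases i <;> simp at hall hle ⊢ <;> omega
  connected := by decide

/-- The positive roots of `E₆` in the basis of simple roots. -/
def posRootsE₆ : Finset (Fin 6 → ℤ) := {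
  ![1,0,0,0,0,0], ![0,1,0,0,0,0], ![0,0,1,0,0,0], ![0,0,0,1,0,0], ![0,0,0,0,1,0],
  ![0,0,0,0,0,1], ![1,0,1,0,0,0], ![0,1,0,1,0,0], ![0,0,1,1,0,0], ![0,0,0,1,1,0],
  ![0,0,0,0,1,1], ![1,0,1,1,0,0], ![0,1,1,1,0,0], ![0,1,0,1,1,0], ![0,0,1,1,1,0],
  ![0,0,0,1,1,1], ![1,1,1,1,0,0], ![1,0,1,1,1,0], ![0,1,1,1,1,0], ![0,1,0,1,1,1],
  ![0,0,1,1,1,1], ![1,1,1,1,1,0], ![1,0,1,1,1,1], ![0,1,1,2,1,0], ![0,1,1,1,1,1],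
  ![1,1,1,2,1,0], ![1,1,1,1,1,1], ![0,1,1,2,1,1], ![1,1,2,2,1,0], ![1,1,1,2,1,1],
  ![0,1,1,2,2,1], ![1,1,2,2,1,1], ![1,1,1,2,2,1], ![1,1,2,2,2,1], ![1,1,2,3,2,1],
  ![1,2,2,3,2,1]}

lemma pos_of_mem_posRootsE₆ : ∀ γ ∈ posRootsE₆, 0 < γ := by
  simp only [Pi.lt_def, Pi.le_def]
  decide +kernel

lemma sub_smul_single_mem_posRootsE₆ : ∀ γ ∈ posRootsE₆, ∀ i, (E₆ *ᵥ γ) i < 0 →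
    γ - (E₆ *ᵥ γ) i • Pi.single i 1 ∈ posRootsE₆ := by
  simp only [mulVec_E₆]
  decide +kernel

lemma card_posRootsE₆ : posRootsE₆.card = 36 := by
  decide +kernel

lemma finite_e₆_and_finrank_le (K : Type*) [Field K] [CharZero K] [Nontrivial (LieAlgebra.e₆ K)] :
    FiniteDimensional K (LieAlgebra.e₆ K) ∧ finrank K (LieAlgebra.e₆ K) ≤ 78 := by
  have := (isChevalley_serre K E₆).finite_and_finrank_le isFiniteType_E₆ posRootsE₆
    pos_of_mem_posRootsE₆ (by decide +kernel) sub_smul_single_mem_posRootsE₆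
  rwa [card_posRootsE₆, Fintype.card_fin] at this

end E6

/-! ### Weights of `F₄` -/

section F4Weights

open CartanMatrix

lemma mulVec_F₄ (γ : Fin 4 → ℤ) : F₄ *ᵥ γ =
    ![2 * γ 0 - γ 1, -γ 0 + 2 * γ 1 - 2 * γ 2, -γ 1 + 2 * γ 2 - γ 3, -γ 2 + 2 * γ 3] := by
  ext i
  fin_cases i <;> simp [F₄, mulVec, dotProduct, Fin.sum_univ_succ] <;> ring

lemma isFiniteType_F₄ : IsFiniteType F₄ where
  diag := by decide
  det_ne_zero hdet := by
    obtain ⟨γ, hγ, h0⟩ := exists_mulVec_eq_zero_iff.mpr hdet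
    clear hdet
    refine hγ (funext fun i => ?_)
    simp only [mulVec_F₄, funext_iff, Fin.forall_fin_succ] at h0
    fin_cases i <;> simp at h0 ⊢ <;> omega
  exists_pos γ hγ := by
    by_contra! hall
    refine hγ.ne' (funext fun i => ?_)
    have hle := hγ.le
    simp only [mulVec_F₄, Fin.forall_fin_succ, Pi.le_def] at hall hle
    fin_cases i <;> simp at hall hle ⊢ <;> omega
  connected := by decide

/-- The `i`-th simple reflection of `F₄`, acting on weights. -/
def reflF₄ (i : Fin 4) (l : Fin 4 → ℤ) : Fin 4 → ℤ := l - l i • F₄.col i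

lemma reflF₄_apply_self (i : Fin 4) (l : Fin 4 → ℤ) : reflF₄ i l i = -l i := by
  simp only [reflF₄, Pi.sub_apply, Pi.smul_apply, col_apply, isFiniteType_F₄.diag, smul_eq_mul]
  ring

lemma reflF₄_reflF₄ (i : Fin 4) (l : Fin 4 → ℤ) : reflF₄ i (reflF₄ i l) = l := by
  rw [reflF₄, reflF₄_apply_self, reflF₄, neg_smul]
  abel

/-- The invariant quadratic form on the weights of `F₄`, normalised to be `2` on short roots. -/
def normF₄ (l : Fin 4 → ℤ) : ℤ :=
  l 0 * (2 * l 0 + 3 * l 1 + 4 * l 2 + 2 * l 3) + l 1 * (3 * l 0 + 6 * l 1 + 8 * l 2 + 4 * l 3) +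
  2 * l 2 * (2 * l 0 + 4 * l 1 + 6 * l 2 + 3 * l 3) + 2 * l 3 * (l 0 + 2 * l 1 + 3 * l 2 + 2 * l 3)

lemma normF₄_sub_smul_col (l : Fin 4 → ℤ) (i : Fin 4) (c : ℤ) :
    normF₄ (l - c • F₄.col i) = normF₄ l + ![2, 2, 4, 4] i * c * (c - l i) := by
  fin_cases i <;> simp [normF₄, F₄] <;> ring

lemma normF₄_reflF₄ (i : Fin 4) (l : Fin 4 → ℤ) : normF₄ (reflF₄ i l) = normF₄ l := by
  rw [reflF₄, normF₄_sub_smul_col]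
  ring

/-- The height of a weight of `F₄`: the sum of its coefficients on the simple roots. -/
def heightF₄ (l : Fin 4 → ℤ) : ℤ := 8 * l 0 + 15 * l 1 + 21 * l 2 + 11 * l 3

lemma heightF₄_reflF₄ (i : Fin 4) (l : Fin 4 → ℤ) :
    heightF₄ (reflF₄ i l) = heightF₄ l - l i := by
  fin_cases i <;> simp [heightF₄, reflF₄, F₄] <;> ring

/-- The short roots of `F₄`, as weights. -/
def shortRootsF₄ : Finset (Fin 4 → ℤ) := {
  ![2,-1,0,0], ![-2,1,0,0], ![1,1,-1,0], ![-1,-1,1,0], ![-1,2,-1,0], ![1,-1,1,-1], ![1,-2,1,0],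
  ![-1,1,-1,1], ![-1,0,1,-1], ![0,1,0,-1], ![1,-1,0,1], ![1,0,-1,1], ![0,-1,0,1], ![-1,1,0,-1],
  ![-1,0,0,1], ![0,1,-1,1], ![1,0,0,-1], ![0,-1,1,-1], ![0,-1,1,0], ![0,1,-1,0], ![-1,1,0,0],
  ![1,-1,0,0], ![1,0,0,0], ![-1,0,0,0]}

/-- The long roots of `F₄`, as weights. -/
def longRootsF₄ : Finset (Fin 4 → ℤ) := {
  ![0,0,-1,2], ![0,-2,1,1], ![0,0,1,-2], ![-2,2,-1,1], ![0,-2,2,-1], ![0,2,-1,-1], ![2,0,-1,1],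
  ![-2,0,1,0], ![-2,2,0,-1], ![0,2,-2,1], ![2,-2,1,-1], ![2,-2,1,0], ![2,0,0,-1], ![2,-2,0,1],
  ![-2,0,1,-1], ![2,0,-1,0], ![0,2,-1,0], ![-2,0,0,1], ![-2,2,-1,0], ![0,0,1,-1], ![0,-2,1,0],
  ![0,0,0,1], ![0,0,-1,1], ![0,0,0,-1]}

lemma card_shortRootsF₄ : shortRootsF₄.card = 24 := by decide +kernel

lemma card_longRootsF₄ : longRootsF₄.card = 24 := by decide +kernel

lemma disjoint_shortRootsF₄_longRootsF₄ : Disjoint shortRootsF₄ longRootsF₄ := by decide +kernel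

lemma zero_notMem_shortRootsF₄ : 0 ∉ shortRootsF₄ := by decide +kernel

lemma zero_notMem_longRootsF₄ : 0 ∉ longRootsF₄ := by decide +kernel

lemma reflF₄_mem_shortRootsF₄ :
    ∀ l ∈ shortRootsF₄, ∀ i, reflF₄ i l ∈ shortRootsF₄ := by decide +kernel

lemma exists_reflF₄_mem_shortRootsF₄ : ∀ l ∈ shortRootsF₄,
    l = ![1, 0, 0, 0] ∨ ∃ i, l i < 0 ∧ reflF₄ i l ∈ shortRootsF₄ := by decide +kernel

lemma exists_reflF₄_mem_longRootsF₄ : ∀ l ∈ longRootsF₄,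
    l = ![0, 0, 0, 1] ∨ ∃ i, l i < 0 ∧ reflF₄ i l ∈ longRootsF₄ := by decide +kernel

lemma mem_iff_mem_of_exists_reflF₄_mem {W : Set (Fin 4 → ℤ)}
    (hW : ∀ l ∈ W, ∀ i, reflF₄ i l ∈ W) {R : Finset (Fin 4 → ℤ)} {θ : Fin 4 → ℤ}
    (hR : ∀ l ∈ R, l = θ ∨ ∃ i, l i < 0 ∧ reflF₄ i l ∈ R) {l : Fin 4 → ℤ} (hl : l ∈ R) :
    l ∈ W ↔ θ ∈ W := by
  obtain ⟨B, hB⟩ := (R.image heightF₄).bddAbove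
  induction hn : (B - heightF₄ l).toNat using Nat.strong_induction_on generalizing l with
  | _ n IH =>
    obtain rfl | ⟨i, hi, hil⟩ := hR l hl
    · rfl
    have hle : heightF₄ (reflF₄ i l) ≤ B :=
      hB (Finset.mem_coe.mpr (Finset.mem_image_of_mem _ hil))
    have hlt := heightF₄_reflF₄ i l
    rw [← IH _ (by omega) hil rfl]
    exact ⟨fun h => hW l h i, fun h => reflF₄_reflF₄ i l ▸ hW _ h i⟩

lemma exists_two_le_of_nonneg {W : Set (Fin 4 → ℤ)} (hW : ∀ l ∈ W, ∀ i, reflF₄ i l ∈ W)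
    {l : Fin 4 → ℤ} (hl : l ∈ W) (hl0 : l ≠ 0) (hpos : ∀ i, 0 ≤ l i) :
    ∃ m ∈ W, 2 ≤ m 0 ∧ normF₄ m = normF₄ l := by
  refine ⟨reflF₄ 1 (reflF₄ 2 (reflF₄ 1 (reflF₄ 3 (reflF₄ 2 (reflF₄ 1 (reflF₄ 0 l)))))), ?_, ?_, ?_⟩
  · exact hW _ (hW _ (hW _ (hW _ (hW _ (hW _ (hW _ hl _) _) _) _) _) _) _
  · -- the coroot in question is the highest one, whose coefficients are all at least `2`
    have h0 : reflF₄ 1 (reflF₄ 2 (reflF₄ 1 (reflF₄ 3 (reflF₄ 2 (reflF₄ 1 (reflF₄ 0 l)))))) 0 =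
        2 * l 0 + 3 * l 1 + 4 * l 2 + 2 * l 3 := by
      simp [reflF₄, F₄]
      ring
    obtain ⟨i, hi⟩ := Function.ne_iff.mp hl0
    have := hpos 0
    have := hpos 1
    have := hpos 2
    have := hpos 3
    rw [h0]
    fin_cases i <;> simp at hi <;> omega
  · simp only [normF₄_reflF₄]

/-- A nonzero element of least norm and, among these, of greatest height is dominant, and then
conjugate to some `m` with `2 ≤ m 0`. By minimality `m - α₀` vanishes. -/
lemma shortRootsF₄_subset {W : Set (Fin 4 → ℤ)} (hfin : W.Finite)
    (hrefl : ∀ l ∈ W, ∀ i, reflF₄ i l ∈ W) (hsub : ∀ l ∈ W, 0 < l 0 → l - F₄.col 0 ∈ W)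
    {l : Fin 4 → ℤ} (hl : l ∈ W) (hl0 : l ≠ 0) : ↑shortRootsF₄ ⊆ W := by
  obtain ⟨b, ⟨hb, hb0⟩, hmin⟩ := Set.exists_min_image {l | l ∈ W ∧ l ≠ 0}
    (fun l => toLex (normF₄ l, -heightF₄ l)) (hfin.subset fun l hl => hl.1) ⟨l, hl, hl0⟩
  simp only [Set.mem_ofPred_eq, Prod.Lex.toLex_le_toLex] at hmin
  have hdom (i : Fin 4) : 0 ≤ b i := by
    by_contra! hi
    have hne : reflF₄ i b ≠ 0 := fun h0 => by
      have := congrFun h0 i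
      rw [reflF₄_apply_self, Pi.zero_apply] at this
      omega
    have := hmin _ ⟨hrefl b hb i, hne⟩
    rw [normF₄_reflF₄, heightF₄_reflF₄] at this
    omega
  obtain ⟨m, hm, hm2, hmb⟩ := exists_two_le_of_nonneg hrefl hb hb0 hdom
  have hm0 : m = F₄.col 0 := by
    by_contra hne
    have hnorm := normF₄_sub_smul_col m 0 1
    have := hmin _ ⟨hsub m hm (by omega), sub_ne_zero.mpr hne⟩
    rw [one_smul, hmb] at hnorm
    simp only [hnorm, cons_val_zero] at this
    omega
  intro s hs
  have hiff {l : Fin 4 → ℤ} := mem_iff_mem_of_exists_reflF₄_mem hrefl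
    exists_reflF₄_mem_shortRootsF₄ (l := l)
  exact (hiff hs).mpr ((hiff (by decide +kernel)).mp (hm0 ▸ hm))

end F4Weights

/-! ### Standard modules of `F₄` -/

section Standard

open CartanMatrix

/-- Standard modules of `F₄`: finite-dimensional modules which, like the traceless part of the
Albert algebra, have a nonzero weight and dimension at most `26`. They turn out to be irreducible
of dimension `26`. -/
structure IsStandard (K : Type*) {L : Type*} (M : Type*) [Field K] [LieRing L] [LieAlgebra K L]
    [AddCommGroup M] [Module K M] [LieRingModule L M] [LieModule K L M] (h : Fin 4 → L) :
    Prop where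
  finrank_le : finrank K M ≤ 26
  exists_ne_zero : ∃ l ≠ 0, wtSpace K M h l ≠ ⊥

variable {K L M : Type*} [Field K] [LieRing L] [LieAlgebra K L]
  [AddCommGroup M] [Module K M] [LieRingModule L M] [LieModule K L M] {h e f : Fin 4 → L}

lemma IsStandard.neg (T : IsStandard K M h) : IsStandard K M (-h) where
  finrank_le := T.finrank_le
  exists_ne_zero := by
    obtain ⟨l, hl0, hl⟩ := T.exists_ne_zero
    exact ⟨-l, neg_ne_zero.mpr hl0, by rwa [wtSpace_neg, neg_neg]⟩

variable [CharZero K]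

namespace IsChevalley

lemma linearIndependent_lie_lie (C : IsChevalley K F₄ h e f) {u : M} (hu0 : u ≠ 0)
    (hu : u ∈ wtSpace K M h (F₄.col 0 + F₄.col 1)) (he0 : ⁅e 0, u⁆ = 0) (he1 : ⁅e 1, u⁆ = 0) :
    LinearIndependent K ![⁅f 0, ⁅f 1, u⁆⁆, ⁅f 1, ⁅f 0, u⁆⁆] := by
  have h01 := C.lie_e_f_of_ne 0 1 (by decide)
  have h10 := C.lie_e_f_of_ne 1 0 (by decide)
  have hu_h0 : ⁅h 0, u⁆ = u := (hu 0).trans (one_smul ℤ u)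
  have hu_h1 : ⁅h 1, u⁆ = u := (hu 1).trans (one_smul ℤ u)
  have he0f0 : ⁅e 0, ⁅f 0, u⁆⁆ = u := by simp [leibniz_lie, C.lie_e_f, hu_h0, he0]
  have he0f1 : ⁅e 0, ⁅f 1, u⁆⁆ = 0 := by simp [leibniz_lie, h01, he0]
  have he1f0 : ⁅e 1, ⁅f 0, u⁆⁆ = 0 := by simp [leibniz_lie, h10, he1]
  have he1f1 : ⁅e 1, ⁅f 1, u⁆⁆ = u := by simp [leibniz_lie, C.lie_e_f, hu_h1, he1]
  have hh0f1 : ⁅h 0, ⁅f 1, u⁆⁆ = (2 : ℤ) • ⁅f 1, u⁆ := C.lie_f_mem_wtSpace 1 hu 0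
  have hh1f0 : ⁅h 1, ⁅f 0, u⁆⁆ = (2 : ℤ) • ⁅f 0, u⁆ := C.lie_f_mem_wtSpace 0 hu 1
  rw [LinearIndependent.pair_iff]
  intro a b hab
  have h0 := congr(⁅e 1, ⁅e 0, $hab⁆⁆)
  have h1 := congr(⁅e 0, ⁅e 1, $hab⁆⁆)
  simp only [lie_add, lie_smul, leibniz_lie (e _) (f _) ⁅f _, u⁆, C.lie_e_f, h01, h10, hh0f1,
    hh1f0, he0f0, he0f1, he1f0, he1f1, zero_lie, lie_zero, add_zero, zero_add, ofNat_zsmul,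
    two_nsmul] at h0 h1
  have h0' : a * 2 + b = 0 := (smul_eq_zero_iff_left hu0).mp (by rw [← h0]; module)
  have h1' : a + b * 2 = 0 := (smul_eq_zero_iff_left hu0).mp (by rw [← h1]; module)
  exact ⟨by linear_combination (2 * h0' - h1') / 3, by linear_combination (2 * h1' - h0') / 3⟩

variable [Nontrivial L] [FiniteDimensional K M]

lemma wtSpace_reflF₄_ne_bot (C : IsChevalley K F₄ h e f) {l : Fin 4 → ℤ}
    (hl : wtSpace K M h l ≠ ⊥) (i : Fin 4) : wtSpace K M h (reflF₄ i l) ≠ ⊥ :=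
  C.wtSpace_sub_ne_bot isFiniteType_F₄ (C.isIntegrable isFiniteType_F₄) hl i

lemma wtSpace_ne_bot_of_mem_shortRootsF₄ (C : IsChevalley K F₄ h e f) {l : Fin 4 → ℤ}
    (hl : wtSpace K M h l ≠ ⊥) (hl0 : l ≠ 0) {m : Fin 4 → ℤ} (hm : m ∈ shortRootsF₄) :
    wtSpace K M h m ≠ ⊥ := by
  refine shortRootsF₄_subset (W := {l | wtSpace K M h l ≠ ⊥})
    (WellFoundedGT.finite_ne_bot_of_iSupIndep (iSupIndep_wtSpace C.lie_h_h))
    (fun l hl i => C.wtSpace_reflF₄_ne_bot hl i) (fun l hl h0 => ?_) hl hl0 hm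
  obtain ⟨x, hx, hx0⟩ := Submodule.exists_mem_ne_zero_of_ne_bot hl
  exact (Submodule.ne_bot_iff _).mpr ⟨_, C.lie_f_mem_wtSpace 0 hx,
    C.lie_f_ne_zero isFiniteType_F₄ (C.isIntegrable isFiniteType_F₄) hx0 hx h0⟩

/-- There are `24` short roots, `24` long roots and a Cartan subalgebra of dimension `4`. -/
lemma le_finrank_F₄ [FiniteDimensional K L] (C : IsChevalley K F₄ h e f) : 52 ≤ finrank K L := by
  have hA := isFiniteType_F₄
  have he (i : Fin 4) : wtSpace K L h (F₄.col i) ≠ ⊥ :=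
    (Submodule.ne_bot_iff _).mpr ⟨e i, C.e_mem_wtSpace i, (C.sl2 hA i).e_ne_zero⟩
  have hshort := card_le_sum_finrank_wtSpace fun l (hl : l ∈ shortRootsF₄) =>
    C.wtSpace_ne_bot_of_mem_shortRootsF₄ (he 0) (by decide +kernel) hl
  have hlong := card_le_sum_finrank_wtSpace (s := longRootsF₄) (h := h) (K := K) (M := L) <| by
    have hiff {l : Fin 4 → ℤ} := mem_iff_mem_of_exists_reflF₄_mem
      (W := {l | wtSpace K L h l ≠ ⊥}) (fun l hl i => C.wtSpace_reflF₄_ne_bot hl i)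
      exists_reflF₄_mem_longRootsF₄ (l := l)
    exact fun l hl => (hiff hl).mpr ((hiff (by decide +kernel)).mp (he 3))
  have hzero : 4 ≤ finrank K (wtSpace K L h 0) := by
    have := finrank_span_eq_card (C.linearIndependent_h hA)
    rw [Fintype.card_fin] at this
    refine this.ge.trans (Submodule.finrank_mono (Submodule.span_le.mpr ?_))
    rintro _ ⟨i, rfl⟩
    exact C.h_mem_wtSpace i
  have hsum := sum_finrank_wtSpace_le (K := K) (M := L) C.lie_h_h
    (insert 0 (shortRootsF₄ ∪ longRootsF₄))
  rw [Finset.sum_insert (by simp [zero_notMem_shortRootsF₄, zero_notMem_longRootsF₄]),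
    Finset.sum_union disjoint_shortRootsF₄_longRootsF₄] at hsum
  rw [card_shortRootsF₄] at hshort
  rw [card_longRootsF₄] at hlong
  omega

end IsChevalley

namespace IsStandard

variable [Nontrivial L] [FiniteDimensional K M]

lemma wtSpace_ne_bot (T : IsStandard K M h) (C : IsChevalley K F₄ h e f) {l : Fin 4 → ℤ}
    (hl : l ∈ shortRootsF₄) : wtSpace K M h l ≠ ⊥ :=
  let ⟨_, hm0, hm⟩ := T.exists_ne_zero
  C.wtSpace_ne_bot_of_mem_shortRootsF₄ hm hm0 hl

lemma wtSpace_zero_ne_bot (T : IsStandard K M h) (C : IsChevalley K F₄ h e f) :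
    wtSpace K M h 0 ≠ ⊥ := by
  obtain ⟨x, hx, hx0⟩ := Submodule.exists_mem_ne_zero_of_ne_bot
    (T.wtSpace_ne_bot C (l := F₄.col 0) (by decide +kernel))
  have hfx := C.lie_f_mem_wtSpace 0 hx
  rw [sub_self] at hfx
  exact (Submodule.ne_bot_iff _).mpr ⟨_, hfx,
    C.lie_f_ne_zero isFiniteType_F₄ (C.isIntegrable isFiniteType_F₄) hx0 hx (by decide)⟩

/-- A further weight `l` would come with a second one `reflF₄ i l`, which leaves no room for `0`. -/
lemma mem_insert_of_wtSpace_ne_bot (T : IsStandard K M h) (C : IsChevalley K F₄ h e f)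
    {l : Fin 4 → ℤ} (hl : wtSpace K M h l ≠ ⊥) : l ∈ insert 0 shortRootsF₄ := by
  by_contra hmem
  obtain ⟨hl0, hlS⟩ := not_or.mp (Finset.mem_insert.not.mp hmem)
  obtain ⟨i, hi⟩ := Function.ne_iff.mp hl0
  have hne : reflF₄ i l ≠ l := fun heq => hi <| by
    have := congrFun heq i
    rw [reflF₄_apply_self] at this
    rw [Pi.zero_apply]
    omega
  have hne0 : reflF₄ i l ≠ 0 := fun heq => hi <| by
    have := congrFun heq i
    rwa [reflF₄_apply_self, Pi.zero_apply, neg_eq_zero] at this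
  have hneS : reflF₄ i l ∉ shortRootsF₄ := fun hmem => hlS <| by
    simpa [reflF₄_reflF₄] using reflF₄_mem_shortRootsF₄ _ hmem i
  let s := insert 0 (insert l (insert (reflF₄ i l) shortRootsF₄))
  have hs : ∀ m ∈ s, wtSpace K M h m ≠ ⊥ := by
    simp only [s, Finset.forall_mem_insert]
    exact ⟨T.wtSpace_zero_ne_bot C, hl, C.wtSpace_reflF₄_ne_bot hl i,
      fun m hm => T.wtSpace_ne_bot C hm⟩
  have hcard : s.card = 27 := by
    rw [Finset.card_insert_of_notMem (by simp [Ne.symm hl0, hne0.symm, zero_notMem_shortRootsF₄]),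
      Finset.card_insert_of_notMem (by simp [hne.symm, hlS]), Finset.card_insert_of_notMem hneS,
      card_shortRootsF₄]
  have := (card_le_sum_finrank_wtSpace hs).trans (sum_finrank_wtSpace_le C.lie_h_h s)
  have := T.finrank_le
  omega

lemma eq_zero_of_mem_wtSpace (T : IsStandard K M h) (C : IsChevalley K F₄ h e f)
    {l : Fin 4 → ℤ} {x : M} (hx : x ∈ wtSpace K M h l) (hl : l ∉ insert 0 shortRootsF₄) :
    x = 0 := by
  by_contra hx0
  exact hl (T.mem_insert_of_wtSpace_ne_bot C ((Submodule.ne_bot_iff _).mpr ⟨x, hx, hx0⟩))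

lemma two_le_finrank_wtSpace_zero (T : IsStandard K M h) (C : IsChevalley K F₄ h e f) :
    2 ≤ finrank K (wtSpace K M h 0) := by
  obtain ⟨u, hu, hu0⟩ := Submodule.exists_mem_ne_zero_of_ne_bot
    (T.wtSpace_ne_bot C (l := F₄.col 0 + F₄.col 1) (by decide +kernel))
  have hli := C.linearIndependent_lie_lie hu0 hu
    (T.eq_zero_of_mem_wtSpace C (C.lie_e_mem_wtSpace 0 hu) (by decide +kernel))
    (T.eq_zero_of_mem_wtSpace C (C.lie_e_mem_wtSpace 1 hu) (by decide +kernel))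
  refine (finrank_span_eq_card hli).ge.trans (Submodule.finrank_mono (Submodule.span_le.mpr ?_))
  have h0 := C.lie_f_mem_wtSpace 0 (C.lie_f_mem_wtSpace 1 hu)
  have h1 := C.lie_f_mem_wtSpace 1 (C.lie_f_mem_wtSpace 0 hu)
  rw [add_sub_cancel_right, sub_self] at h0
  rw [add_sub_cancel_left, sub_self] at h1
  exact Set.range_subset_iff.mpr (Fin.forall_fin_two.mpr ⟨h0, h1⟩)

lemma le_sum_finrank_wtSpace (T : IsStandard K M h) (C : IsChevalley K F₄ h e f) :
    26 ≤ ∑ l ∈ insert 0 shortRootsF₄, finrank K (wtSpace K M h l) := by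
  have hcard := card_le_sum_finrank_wtSpace fun l hl => T.wtSpace_ne_bot C hl
  rw [card_shortRootsF₄] at hcard
  rw [Finset.sum_insert zero_notMem_shortRootsF₄]
  have := T.two_le_finrank_wtSpace_zero C
  omega

lemma finrank_eq (T : IsStandard K M h) (C : IsChevalley K F₄ h e f) : finrank K M = 26 :=
  T.finrank_le.antisymm ((T.le_sum_finrank_wtSpace C).trans (sum_finrank_wtSpace_le C.lie_h_h _))

lemma biSup_wtSpace_eq_top (T : IsStandard K M h) (C : IsChevalley K F₄ h e f) :
    ⨆ l ∈ insert 0 shortRootsF₄, wtSpace K M h l = ⊤ := by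
  refine Submodule.eq_top_of_finrank_eq ((Submodule.finrank_le _).antisymm ?_)
  rw [finrank_biSup_of_iSupIndep (iSupIndep_wtSpace C.lie_h_h)]
  exact T.finrank_le.trans (T.le_sum_finrank_wtSpace C)

lemma finrank_wtSpace (T : IsStandard K M h) (C : IsChevalley K F₄ h e f) {l : Fin 4 → ℤ}
    (hl : l ∈ shortRootsF₄) : finrank K (wtSpace K M h l) = 1 := by
  have hsum := (sum_finrank_wtSpace_le (K := K) (M := M) C.lie_h_h (insert 0 shortRootsF₄)).trans
    T.finrank_le
  have hcard := card_le_sum_finrank_wtSpace (s := shortRootsF₄.erase l) fun m hm =>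
    T.wtSpace_ne_bot C (Finset.mem_of_mem_erase hm)
  rw [Finset.card_erase_of_mem hl, card_shortRootsF₄] at hcard
  rw [Finset.sum_insert zero_notMem_shortRootsF₄, ← Finset.add_sum_erase _ _ hl] at hsum
  have := T.two_le_finrank_wtSpace_zero C
  have := Submodule.one_le_finrank_iff.mpr (T.wtSpace_ne_bot C hl)
  omega

/-- Either `N` or `M ⧸ N` is again standard. -/
lemma isIrreducible (T : IsStandard K M h) (C : IsChevalley K F₄ h e f) :
    LieModule.IsIrreducible K L M := by
  have : Nontrivial M := nontrivial_of_finrank_pos (R := K) (by rw [T.finrank_eq C]; norm_num)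
  refine LieModule.IsIrreducible.mk fun N hN => ?_
  by_cases hNh : ∃ l ≠ 0, wtSpace K N h l ≠ ⊥
  · have TN : IsStandard K N h := ⟨(Submodule.finrank_le N.toSubmodule).trans T.finrank_le, hNh⟩
    rw [← LieSubmodule.toSubmodule_eq_top]
    exact Submodule.eq_top_of_finrank_eq ((TN.finrank_eq C).trans (T.finrank_eq C).symm)
  · push Not at hNh
    obtain ⟨l, hl0, hl⟩ := T.exists_ne_zero
    obtain ⟨x, hx, hx0⟩ := Submodule.exists_mem_ne_zero_of_ne_bot hl
    have hxN : x ∉ N := fun hxN => hx0 <| congrArg Subtype.val <|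
      (Submodule.eq_bot_iff _).mp (hNh l hl0) ⟨x, hxN⟩ fun i => Subtype.ext (hx i)
    have TQ : IsStandard K (M ⧸ N) h := by
      refine ⟨(Submodule.finrank_quotient_le N.toSubmodule).trans T.finrank_le, l, hl0,
        (Submodule.ne_bot_iff _).mpr ⟨LieSubmodule.Quotient.mk' N x, fun i => ?_, ?_⟩⟩
      · rw [← LieModuleHom.map_lie, hx i, map_zsmul]
      · simpa using hxN
    have := Submodule.finrank_quotient_add_finrank N.toSubmodule
    rw [T.finrank_eq C, show finrank K (M ⧸ N.toSubmodule) = 26 from TQ.finrank_eq C] at this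
    exact absurd ((LieSubmodule.toSubmodule_eq_bot N).mp
      (Submodule.finrank_eq_zero.mp (by omega))) hN

end IsStandard

end Standard

/-! ### Highest weight vectors -/

section HighestWeight

variable {K ι L M : Type*} [Field K] [LieRing L] [AddCommGroup M] [Module K M] [LieRingModule L M]

/-- The vector obtained from `v` by applying the members of `f` with indices in the list, from right
to left. -/
def iterLie (f : ι → L) (v : M) : List ι → M
  | [] => v
  | i :: w => ⁅f i, iterLie f v w⁆

variable (K) in
/-- The submodule spanned by the iterated images of `v` under the `f i`. -/
def wordSpan (f : ι → L) (v : M) : Submodule K M := Submodule.span K (Set.range (iterLie f v))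

variable {A : Matrix ι ι ℤ} {h e f : ι → L} {v : M} {θ : ι → ℤ}

lemma mem_wordSpan_self : v ∈ wordSpan K f v := Submodule.subset_span ⟨[], rfl⟩

lemma wordSpan_le {U : Submodule K M} (hv : v ∈ U) (hf : ∀ i, ∀ x ∈ U, ⁅f i, x⁆ ∈ U) :
    wordSpan K f v ≤ U := by
  refine Submodule.span_le.mpr ?_
  rintro _ ⟨w, rfl⟩
  induction w with
  | nil => exact hv
  | cons i w ih => exact hf i _ ih

variable [LieAlgebra K L] [LieModule K L M]

lemma lie_mem_wordSpan (i : ι) {x : M} (hx : x ∈ wordSpan K f v) : ⁅f i, x⁆ ∈ wordSpan K f v := by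
  suffices wordSpan K f v ≤ (wordSpan K f v).comap (toEnd K L M (f i)) from this hx
  refine Submodule.span_le.mpr ?_
  rintro _ ⟨w, rfl⟩
  exact Submodule.subset_span ⟨i :: w, rfl⟩

lemma IsFiniteType.eq_nil_of_sum_map_col_eq_zero [Fintype ι] [DecidableEq ι]
    (hA : IsFiniteType A) {w : List ι} (hw : (w.map A.col).sum = 0) : w = [] := by
  have hsum : (w.map A.col).sum = A *ᵥ (w.map (Pi.single · 1)).sum := by
    clear hw
    induction w with
    | nil => simp
    | cons i w ih => simp [ih, mulVec_add]
  by_contra hne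
  obtain ⟨i, hi⟩ := hA.exists_pos (w.map (Pi.single · 1)).sum <|
    List.sum_pos _ (by simp [Pi.single_pos]) (by simpa using hne)
  simp [← hsum, hw] at hi

namespace IsChevalley

lemma iterLie_mem_wtSpace (C : IsChevalley K A h e f) (hv : v ∈ wtSpace K M h θ) (w : List ι) :
    iterLie f v w ∈ wtSpace K M h (θ - (w.map A.col).sum) := by
  induction w with
  | nil => simpa [iterLie] using hv
  | cons i w ih =>
    rw [List.map_cons, List.sum_cons, add_comm, ← sub_sub]
    exact C.lie_f_mem_wtSpace i ih

lemma lie_e_mem_wordSpan (C : IsChevalley K A h e f) (hv : v ∈ wtSpace K M h θ)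
    (hev : ∀ i, ⁅e i, v⁆ = 0) (i : ι) {x : M} (hx : x ∈ wordSpan K f v) :
    ⁅e i, x⁆ ∈ wordSpan K f v := by
  suffices wordSpan K f v ≤ (wordSpan K f v).comap (toEnd K L M (e i)) from this hx
  refine Submodule.span_le.mpr ?_
  rintro _ ⟨w, rfl⟩
  rw [SetLike.mem_coe, Submodule.mem_comap, toEnd_apply_apply]
  induction w with
  | nil => simp [iterLie, hev]
  | cons j w ih =>
    rw [iterLie, leibniz_lie]
    refine add_mem ?_ (lie_mem_wordSpan j ih)
    obtain rfl | hij := eq_or_ne i j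
    · have hw : iterLie f v w ∈ wordSpan K f v := Submodule.subset_span ⟨w, rfl⟩
      rw [C.lie_e_f, C.iterLie_mem_wtSpace hv w i]
      exact zsmul_mem hw _
    · rw [C.lie_e_f_of_ne i j hij, zero_lie]
      exact zero_mem _

lemma lieSpan_eq_wordSpan (C : IsChevalley K A h e f) (hv : v ∈ wtSpace K M h θ)
    (hev : ∀ i, ⁅e i, v⁆ = 0) :
    (LieSubmodule.lieSpan K L {v}).toSubmodule = wordSpan K f v := by
  let N : LieSubmodule K L M :=
    { wordSpan K f v with
      lie_mem := fun hx => C.lie_mem_of_forall_mem (fun i _ => C.lie_e_mem_wordSpan hv hev i)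
        (fun i _ => lie_mem_wordSpan i) _ hx }
  refine le_antisymm (LieSubmodule.lieSpan_le (N := N).mpr ?_) (wordSpan_le ?_ ?_)
  · exact Set.singleton_subset_iff.mpr mem_wordSpan_self
  · exact LieSubmodule.subset_lieSpan rfl
  · exact fun i x hx => LieSubmodule.lie_mem _ hx

lemma eq_top_of_highest [LieModule.IsIrreducible K L M] (C : IsChevalley K A h e f) (hv0 : v ≠ 0)
    (hv : v ∈ wtSpace K M h θ) (hev : ∀ i, ⁅e i, v⁆ = 0) {U : Submodule K M} (hvU : v ∈ U)
    (hf : ∀ i, ∀ x ∈ U, ⁅f i, x⁆ ∈ U) : U = ⊤ := by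
  have htop : LieSubmodule.lieSpan K L {v} = ⊤ :=
    (eq_bot_or_eq_top _).resolve_left
      (by simpa [LieSubmodule.lieSpan_eq_bot_iff])
  rw [eq_top_iff, ← LieSubmodule.top_toSubmodule (R := K) (L := L), ← htop,
    C.lieSpan_eq_wordSpan hv hev]
  exact wordSpan_le hvU hf

variable [Fintype ι] [DecidableEq ι]

lemma mem_span_of_mem_lieSpan [CharZero K] (C : IsChevalley K A h e f) (hA : IsFiniteType A)
    (hv : v ∈ wtSpace K M h θ) (hev : ∀ i, ⁅e i, v⁆ = 0) {x : M}
    (hx : x ∈ LieSubmodule.lieSpan K L {v}) (hxθ : x ∈ wtSpace K M h θ) :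
    x ∈ Submodule.span K {v} := by
  rw [← LieSubmodule.mem_toSubmodule, C.lieSpan_eq_wordSpan hv hev] at hx
  refine Submodule.span_le.mpr ?_ (mem_span_inter_wtSpace C.lie_h_h ?_ hxθ hx)
  · rintro _ ⟨⟨w, rfl⟩, hwθ⟩
    by_cases hw : w = []
    · subst hw
      exact Submodule.mem_span_singleton_self v
    · suffices iterLie f v w = 0 by simp [this]
      by_contra hne
      have := eq_of_mem_wtSpace C.lie_h_h hne hwθ (C.iterLie_mem_wtSpace hv w)
      exact hw (hA.eq_nil_of_sum_map_col_eq_zero (sub_eq_self.mp this.symm))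
  · rintro _ ⟨w, rfl⟩
    exact ⟨_, C.iterLie_mem_wtSpace hv w⟩

end IsChevalley

end HighestWeight

section ProdModule

variable {K L M M' : Type*} [CommRing K] [LieRing L] [LieAlgebra K L]
  [AddCommGroup M] [Module K M] [LieRingModule L M] [LieModule K L M]
  [AddCommGroup M'] [Module K M'] [LieRingModule L M'] [LieModule K L M']

/-- The componentwise action on the product of two Lie modules. -/
instance : LieRingModule L (M × M') where
  bracket x m := (⁅x, m.1⁆, ⁅x, m.2⁆)
  add_lie x y m := Prod.ext (add_lie x y m.1) (add_lie x y m.2)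
  lie_add x m n := Prod.ext (lie_add x m.1 n.1) (lie_add x m.2 n.2)
  leibniz_lie x y m := Prod.ext (leibniz_lie x y m.1) (leibniz_lie x y m.2)

instance : LieModule K L (M × M') where
  smul_lie c x m := Prod.ext (smul_lie c x m.1) (smul_lie c x m.2)
  lie_smul c x m := Prod.ext (lie_smul c x m.1) (lie_smul c x m.2)

variable (K L M M')

/-- The first projection from a product of Lie modules. -/
def fstHom : M × M' →ₗ⁅K,L⁆ M := { LinearMap.fst K M M' with map_lie' := rfl }

/-- The second projection from a product of Lie modules. -/
def sndHom : M × M' →ₗ⁅K,L⁆ M' := { LinearMap.snd K M M' with map_lie' := rfl }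

variable {K L M M'}

/-- A bijective homomorphism of Lie modules, as an equivalence. -/
noncomputable def lieModuleEquivOfBijective (φ : M →ₗ⁅K,L⁆ M') (hφ : Function.Bijective φ) :
    M ≃ₗ⁅K,L⁆ M' :=
  { LinearEquiv.ofBijective φ.toLinearMap hφ, φ with }

end ProdModule

section Equiv

variable {K ι L M M' P : Type*} [Field K] [LieRing L] [LieAlgebra K L]
  [AddCommGroup M] [Module K M] [LieRingModule L M]
  [AddCommGroup M'] [Module K M'] [LieRingModule L M']
  [AddCommGroup P] [Module K P] [LieRingModule L P] [LieModule K L P]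
  [LieModule.IsIrreducible K L M] [LieModule.IsIrreducible K L M'] {h : ι → L} {θ : ι → ℤ}

/-- If `φ` were not injective, `φ'` would map its kernel isomorphically onto `M'`, so the kernel
would contain the whole weight space of `p`. -/
lemma bijective_of_jointly_injective {φ : P →ₗ⁅K,L⁆ M} {φ' : P →ₗ⁅K,L⁆ M'}
    (hφφ' : ∀ x, φ x = 0 → φ' x = 0 → x = 0) {p : P} (hp : p ∈ wtSpace K P h θ)
    (hpθ : wtSpace K P h θ ≤ Submodule.span K {p}) (hφp : φ p ≠ 0) (hφ'p : φ' p ≠ 0) :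
    Function.Bijective φ := by
  refine ⟨(injective_iff_map_eq_zero φ).mpr fun x hx => ?_, ?_⟩
  · obtain hbot | htop := eq_bot_or_eq_top (φ.ker.map φ')
    · have : φ' x ∈ φ.ker.map φ' := LieSubmodule.mem_map_of_mem hx
      rw [hbot] at this
      exact hφφ' x hx this
    · obtain ⟨k, hk, hkp⟩ := (LieSubmodule.mem_map (φ' p)).mp (htop ▸ LieSubmodule.mem_top (φ' p))
      have hk0 : φ k = 0 := hk
      have hkθ : k ∈ wtSpace K P h θ := fun i => by
        refine sub_eq_zero.mp (hφφ' _ (by simp [hk0]) ?_)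
        rw [map_sub, LieModuleHom.map_lie, map_zsmul, hkp, ← LieModuleHom.map_lie, hp i, map_zsmul,
          sub_self]
      obtain ⟨c, rfl⟩ := Submodule.mem_span_singleton.mp (hpθ hkθ)
      rw [map_smul, smul_eq_zero_iff_left hφp] at hk0
      rw [hk0, zero_smul, map_zero] at hkp
      exact absurd hkp.symm hφ'p
  · rw [← LieModuleHom.range_eq_top]
    refine (eq_bot_or_eq_top φ.range).resolve_left fun hbot => hφp ?_
    exact (LieSubmodule.mem_bot _).mp (hbot.le ⟨p, rfl⟩)

/-- The submodule generated by a pair of highest weight vectors is the graph of an isomorphism. -/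
lemma IsChevalley.nonempty_equiv_of_highest [LieModule K L M] [LieModule K L M']
    [CharZero K] [Fintype ι] [DecidableEq ι]
    {A : Matrix ι ι ℤ} {e f : ι → L} (C : IsChevalley K A h e f) (hA : IsFiniteType A)
    {v : M} (hv0 : v ≠ 0) (hv : v ∈ wtSpace K M h θ) (hev : ∀ i, ⁅e i, v⁆ = 0)
    {v' : M'} (hv0' : v' ≠ 0) (hv' : v' ∈ wtSpace K M' h θ) (hev' : ∀ i, ⁅e i, v'⁆ = 0) :
    Nonempty (M ≃ₗ⁅K,L⁆ M') := by
  have hvv : (v, v') ∈ wtSpace K (M × M') h θ := fun i => Prod.ext (hv i) (hv' i)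
  let N : LieSubmodule K L (M × M') := LieSubmodule.lieSpan K L {(v, v')}
  let p : N := ⟨(v, v'), LieSubmodule.subset_lieSpan rfl⟩
  have hp : p ∈ wtSpace K N h θ := fun i => Subtype.ext (hvv i)
  have hpθ : wtSpace K N h θ ≤ Submodule.span K {p} := fun x hx => by
    obtain ⟨c, hc⟩ := Submodule.mem_span_singleton.mp <| C.mem_span_of_mem_lieSpan hA hvv
      (fun i => Prod.ext (hev i) (hev' i)) x.2 fun i => congrArg Subtype.val (hx i)
    exact Submodule.mem_span_singleton.mpr ⟨c, Subtype.ext hc⟩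
  have hinj (x : N) (hx : ((x : M × M')).1 = 0) (hx' : (x : M × M').2 = 0) : x = 0 :=
    Subtype.ext (Prod.ext hx hx')
  have hπ : Function.Bijective ((fstHom K L M M').comp N.incl) :=
    bijective_of_jointly_injective (φ' := (sndHom K L M M').comp N.incl) hinj hp hpθ hv0 hv0'
  have hπ' : Function.Bijective ((sndHom K L M M').comp N.incl) :=
    bijective_of_jointly_injective (φ' := (fstHom K L M M').comp N.incl)
      (fun x hx' hx => hinj x hx hx') hp hpθ hv0' hv0
  exact ⟨(lieModuleEquivOfBijective _ hπ).symm.trans (lieModuleEquivOfBijective _ hπ')⟩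

end Equiv

namespace IsStandard

open CartanMatrix

variable {K L M : Type*} [Field K] [CharZero K] [LieRing L] [LieAlgebra K L] [Nontrivial L]
  [AddCommGroup M] [Module K M] [LieRingModule L M] [LieModule K L M] [FiniteDimensional K M]
  {h e f : Fin 4 → L}

lemma exists_highest (T : IsStandard K M h) (C : IsChevalley K F₄ h e f) :
    ∃ v : M, v ≠ 0 ∧ v ∈ wtSpace K M h ![1, 0, 0, 0] ∧ ∀ i, ⁅e i, v⁆ = 0 := by
  obtain ⟨v, hv, hv0⟩ := Submodule.exists_mem_ne_zero_of_ne_bot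
    (T.wtSpace_ne_bot C (l := ![1, 0, 0, 0]) (by decide +kernel))
  have hadd : ∀ i, ![1, 0, 0, 0] + F₄.col i ∉ insert 0 shortRootsF₄ := by decide +kernel
  exact ⟨v, hv0, hv, fun i => T.eq_zero_of_mem_wtSpace C (C.lie_e_mem_wtSpace i hv) (hadd i)⟩

lemma nonempty_equiv {M' : Type*} [AddCommGroup M'] [Module K M'] [LieRingModule L M']
    [LieModule K L M'] [FiniteDimensional K M'] (T : IsStandard K M h) (T' : IsStandard K M' h)
    (C : IsChevalley K F₄ h e f) : Nonempty (M ≃ₗ⁅K,L⁆ M') := by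
  obtain ⟨v, hv0, hv, hev⟩ := T.exists_highest C
  obtain ⟨v', hv0', hv', hev'⟩ := T'.exists_highest C
  have := T.isIrreducible C
  have := T'.isIrreducible C
  exact C.nonempty_equiv_of_highest isFiniteType_F₄ hv0 hv hev hv0' hv' hev'

lemma wtSpace_le_span_singleton (T : IsStandard K M h) (C : IsChevalley K F₄ h e f)
    {l : Fin 4 → ℤ} (hl : l ∈ shortRootsF₄) {x : M} (hx0 : x ≠ 0) (hx : x ∈ wtSpace K M h l) :
    wtSpace K M h l ≤ Submodule.span K {x} := fun y hy => by
  obtain ⟨c, hc⟩ := (finrank_eq_one_iff_of_nonzero' ⟨x, hx⟩ (by simpa using hx0)).mp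
    (T.finrank_wtSpace C hl) ⟨y, hy⟩
  exact Submodule.mem_span_singleton.mpr ⟨c, congrArg Subtype.val hc⟩

/-- Both sides of the equality are `⁅e 2, ⁅e 1, ⁅e 1, ⁅e 2, w⁆⁆⁆⁆`, for `a = ⁅e 1, ⁅e 1, e 2⁆⁆`. -/
lemma exists_lie_lie_comm (T : IsStandard K M h) (C : IsChevalley K F₄ h e f) :
    ∃ w ∈ wtSpace K M h ![1, 0, -1, 1], ∃ a ∈ wtSpace K L h ![-2, 2, 0, -1],
      ⁅a, ⁅e 2, w⁆⁆ ≠ 0 ∧ ⁅a, ⁅e 2, w⁆⁆ = ⁅e 2, ⁅a, w⁆⁆ := by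
  have hM := C.isIntegrable (M := M) isFiniteType_F₄
  obtain ⟨w, hw, hw0⟩ := Submodule.exists_mem_ne_zero_of_ne_bot
    (T.wtSpace_ne_bot C (l := ![1, 0, -1, 1]) (by decide +kernel))
  have hx := C.lie_e_mem_wtSpace 2 hw
  rw [show ![1, 0, -1, 1] + F₄.col 2 = ![1, -2, 1, 0] by decide +kernel] at hx
  have hx0 := C.lie_e_ne_zero isFiniteType_F₄ hM hw0 hw (i := 2) (by decide)
  have hfx : ⁅f 1, ⁅e 2, w⁆⁆ = 0 :=
    T.eq_zero_of_mem_wtSpace C (C.lie_f_mem_wtSpace 1 hx) (by decide +kernel)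
  have heex := C.lie_e_mem_wtSpace 1 (C.lie_e_mem_wtSpace 1 hx)
  rw [show ![1, -2, 1, 0] + F₄.col 1 + F₄.col 1 = ![-1, 2, -1, 0] by decide +kernel] at heex
  have heex0 : ⁅e 1, ⁅e 1, ⁅e 2, w⁆⁆⁆ ≠ 0 :=
    C.pow_toEnd_e_ne_zero isFiniteType_F₄ hx0 hx (n := 2) rfl hfx
  have he1w : ⁅e 1, w⁆ = 0 :=
    T.eq_zero_of_mem_wtSpace C (C.lie_e_mem_wtSpace 1 hw) (by decide +kernel)
  have he2x : ⁅e 2, ⁅e 2, w⁆⁆ = 0 :=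
    T.eq_zero_of_mem_wtSpace C (C.lie_e_mem_wtSpace 2 hx) (by decide +kernel)
  have he2ex : ⁅e 2, ⁅e 1, ⁅e 2, w⁆⁆⁆ = 0 := T.eq_zero_of_mem_wtSpace C
    (C.lie_e_mem_wtSpace 2 (C.lie_e_mem_wtSpace 1 hx)) (by decide +kernel)
  have hax : ⁅⁅e 1, ⁅e 1, e 2⁆⁆, ⁅e 2, w⁆⁆ = ⁅e 2, ⁅e 1, ⁅e 1, ⁅e 2, w⁆⁆⁆⁆ := by
    simp [lie_lie, he2x, he2ex]
  have haw : ⁅⁅e 1, ⁅e 1, e 2⁆⁆, w⁆ = ⁅e 1, ⁅e 1, ⁅e 2, w⁆⁆⁆ := by simp [lie_lie, he1w]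
  refine ⟨w, hw, ⁅e 1, ⁅e 1, e 2⁆⁆, ?_, ?_, by rw [hax, haw]⟩
  · convert lie_mem_wtSpace (C.e_mem_wtSpace 1)
      (lie_mem_wtSpace (C.e_mem_wtSpace 1) (C.e_mem_wtSpace 2)) using 2
    decide +kernel
  · rw [hax]
    exact C.lie_e_ne_zero isFiniteType_F₄ hM heex0 heex (i := 2) (by decide)

lemma exists_lie_ne_zero (T : IsStandard K M h) (C : IsChevalley K F₄ h e f) :
    ∃ w ∈ wtSpace K M h ![-1, 0, 0, 1], ∃ a ∈ wtSpace K L h ![2, 0, 0, -1], ⁅a, w⁆ ≠ 0 := by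
  have hM := C.isIntegrable (M := M) isFiniteType_F₄
  obtain ⟨w, hw, hw0⟩ := Submodule.exists_mem_ne_zero_of_ne_bot
    (T.wtSpace_ne_bot C (l := ![-1, 0, 0, 1]) (by decide +kernel))
  have step {l : Fin 4 → ℤ} {x : M} (hx0 : x ≠ 0) (hx : x ∈ wtSpace K M h l) (i : Fin 4)
      (hi : l i < 0) : ⁅e i, x⁆ ≠ 0 ∧ ⁅e i, x⁆ ∈ wtSpace K M h (l + F₄.col i) :=
    ⟨C.lie_e_ne_zero isFiniteType_F₄ hM hx0 hx hi, C.lie_e_mem_wtSpace i hx⟩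
  have kill {l : Fin 4 → ℤ} {x : M} (hx : x ∈ wtSpace K M h l) (i : Fin 4)
      (hl : l + F₄.col i ∉ insert 0 shortRootsF₄) : ⁅e i, x⁆ = 0 :=
    T.eq_zero_of_mem_wtSpace C (C.lie_e_mem_wtSpace i hx) hl
  obtain ⟨h1, m1⟩ := step hw0 hw 0 (by decide)
  obtain ⟨h2, m2⟩ := step h1 m1 1 (by decide +kernel)
  obtain ⟨h3, m3⟩ := step h2 m2 2 (by decide +kernel)
  obtain ⟨h4, m4⟩ := step h3 m3 1 (by decide +kernel)
  obtain ⟨h5, -⟩ := step h4 m4 0 (by decide +kernel)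
  have haw : ⁅⁅e 0, ⁅e 1, ⁅e 2, ⁅e 1, e 0⁆⁆⁆⁆, w⁆ =
      (2 : K) • ⁅e 0, ⁅e 1, ⁅e 2, ⁅e 1, ⁅e 0, w⁆⁆⁆⁆⁆ := by
    simp [lie_lie, two_smul, kill hw 1 (by decide +kernel), kill hw 2 (by decide +kernel),
      kill m1 0 (by decide +kernel), kill m1 2 (by decide +kernel),
      kill m2 0 (by decide +kernel), kill m2 1 (by decide +kernel),
      kill m3 0 (by decide +kernel)]
  refine ⟨w, hw, ⁅e 0, ⁅e 1, ⁅e 2, ⁅e 1, e 0⁆⁆⁆⁆, ?_, haw ▸ smul_ne_zero two_ne_zero h5⟩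
  convert lie_mem_wtSpace (C.e_mem_wtSpace 0) (lie_mem_wtSpace (C.e_mem_wtSpace 1)
    (lie_mem_wtSpace (C.e_mem_wtSpace 2)
      (lie_mem_wtSpace (C.e_mem_wtSpace 1) (C.e_mem_wtSpace 0)))) using 2
  decide +kernel

end IsStandard

/-! ### Invariant alternating trilinear forms -/

section Trilinear

variable {K L M : Type*} [Field K] [LieRing L] [LieAlgebra K L]
  [AddCommGroup M] [Module K M] [LieRingModule L M] [LieModule K L M]

/-- Trilinear forms which change sign under transpositions of adjacent arguments and are annihilated
by the action of `L`. -/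
structure IsInvariantAlternating (L : Type*) [LieRing L] [LieRingModule L M]
    (B : M →ₗ[K] M →ₗ[K] M →ₗ[K] K) : Prop where
  swap_left : ∀ x y z, B x y z = -B y x z
  swap_right : ∀ x y z, B x y z = -B x z y
  lie : ∀ (a : L) x y z, B ⁅a, x⁆ y z + B x ⁅a, y⁆ z + B x y ⁅a, z⁆ = 0

/-- The trilinear form `B` vanishes on triples of vectors of the weights `0`, `l` and `-l`. -/
def VanishesAt {ι : Type*} (B : M →ₗ[K] M →ₗ[K] M →ₗ[K] K) (h : ι → L) (l : ι → ℤ) : Prop :=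
  ∀ x ∈ wtSpace K M h 0, ∀ y ∈ wtSpace K M h l, ∀ z ∈ wtSpace K M h (-l), B x y z = 0

open CartanMatrix

namespace IsInvariantAlternating

variable {B : M →ₗ[K] M →ₗ[K] M →ₗ[K] K}

lemma lie_right {K L M : Type*} [Field K] [LieRing L] [AddCommGroup M] [Module K M]
    [LieRingModule L M] {B : M →ₗ[K] M →ₗ[K] M →ₗ[K] K} (hB : IsInvariantAlternating L B)
    {a : L} {x : M} (ha : ⁅a, x⁆ = 0) (y z : M) : B x y ⁅a, z⁆ = -B x ⁅a, y⁆ z := by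
  have := hB.lie a x y z
  rw [ha, map_zero, LinearMap.zero_apply, LinearMap.zero_apply, zero_add] at this
  exact eq_neg_of_add_eq_zero_right this

lemma eq_zero_of_add_ne_zero {ι : Type*} {h : ι → L} [CharZero K] (hB : IsInvariantAlternating L B)
    {l m n : ι → ℤ} {x y z : M} (hx : x ∈ wtSpace K M h l) (hy : y ∈ wtSpace K M h m)
    (hz : z ∈ wtSpace K M h n) (hlmn : l + m + n ≠ 0) : B x y z = 0 := by
  obtain ⟨i, hi⟩ := Function.ne_iff.mp hlmn
  have := hB.lie (h i) x y z
  rw [hx i, hy i, hz i] at this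
  simp only [map_zsmul, LinearMap.smul_apply, ← add_smul] at this
  exact (smul_eq_zero.mp this).resolve_left hi

lemma vanishesAt_neg {ι : Type*} {h : ι → L} {l : ι → ℤ} (hB : IsInvariantAlternating L B)
    (hl : VanishesAt B h l) : VanishesAt B h (-l) := fun x hx y hy z hz => by
  rw [neg_neg] at hz
  rw [hB.swap_right, hl x hx z hz y hy, neg_zero]

variable [CharZero K] [Nontrivial L] [FiniteDimensional K M] {h e f : Fin 4 → L}

lemma vanishesAt_add (hB : IsInvariantAlternating L B) (T : IsStandard K M h)
    (C : IsChevalley K F₄ h e f) {a : L} {m l : Fin 4 → ℤ} (ha : a ∈ wtSpace K L h m)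
    (hm : m ∉ insert 0 shortRootsF₄) (hlm : l + m ∈ shortRootsF₄) {y : M}
    (hy : y ∈ wtSpace K M h l) (hay : ⁅a, y⁆ ≠ 0) (hl : VanishesAt B h l) :
    VanishesAt B h (l + m) := fun x hx y' hy' z hz => by
  have hay' : ⁅a, y⁆ ∈ wtSpace K M h (l + m) := add_comm m l ▸ lie_mem_wtSpace ha hy
  obtain ⟨c, rfl⟩ := Submodule.mem_span_singleton.mp
    (T.wtSpace_le_span_singleton C hlm hay hay' hy')
  have hax : ⁅a, x⁆ = 0 := T.eq_zero_of_mem_wtSpace C (lie_mem_wtSpace ha hx) (by rwa [add_zero])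
  have haz : ⁅a, z⁆ ∈ wtSpace K M h (-l) := by
    convert lie_mem_wtSpace ha hz using 2
    abel
  rw [map_smul, LinearMap.smul_apply, ← neg_eq_iff_eq_neg.mpr (hB.lie_right hax y z),
    hl x hx y hy _ haz, neg_zero, smul_zero]

/-- Move `a` and then `e 2` from the third argument of `B u w ⁅a, ⁅e 2, w⁆⁆` to the second. -/
lemma vanishesAt_short (hB : IsInvariantAlternating L B) (T : IsStandard K M h)
    (C : IsChevalley K F₄ h e f) : VanishesAt B h ![1, 0, -1, 1] := by
  obtain ⟨w, hw, a, ha, hz0, haw⟩ := T.exists_lie_lie_comm C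
  have hz' := lie_mem_wtSpace ha (C.lie_e_mem_wtSpace 2 hw)
  rw [show ![-2, 2, 0, -1] + (![1, 0, -1, 1] + F₄.col 2) = -![1, 0, -1, 1] by decide +kernel]
    at hz'
  intro u hu y hy z hz
  obtain ⟨c, rfl⟩ := Submodule.mem_span_singleton.mp
    (T.wtSpace_le_span_singleton C (by decide +kernel) (by rintro rfl; simp at hz0) hw hy)
  obtain ⟨d, rfl⟩ := Submodule.mem_span_singleton.mp
    (T.wtSpace_le_span_singleton C (by decide +kernel) hz0 hz' hz)
  have hau : ⁅a, u⁆ = 0 := T.eq_zero_of_mem_wtSpace C (lie_mem_wtSpace ha hu) (by decide +kernel)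
  have heu : ⁅e 2, u⁆ = 0 :=
    T.eq_zero_of_mem_wtSpace C (C.lie_e_mem_wtSpace 2 hu) (by decide +kernel)
  have hBu : B u w ⁅a, ⁅e 2, w⁆⁆ = -B u w ⁅a, ⁅e 2, w⁆⁆ := calc
    B u w ⁅a, ⁅e 2, w⁆⁆ = -B u ⁅a, w⁆ ⁅e 2, w⁆ := hB.lie_right hau w _
    _ = B u ⁅e 2, ⁅a, w⁆⁆ w := by rw [hB.lie_right heu, neg_neg]
    _ = -B u w ⁅a, ⁅e 2, w⁆⁆ := by rw [haw, hB.swap_right]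
  simp [self_eq_neg.mp hBu]

lemma vanishesAt_highest (hB : IsInvariantAlternating L B) (T : IsStandard K M h)
    (C : IsChevalley K F₄ h e f) : VanishesAt B h ![1, 0, 0, 0] := by
  have hM := C.isIntegrable (M := M) isFiniteType_F₄
  obtain ⟨y, hy, hy0⟩ := Submodule.exists_mem_ne_zero_of_ne_bot
    (T.wtSpace_ne_bot C (l := -![1, 0, -1, 1]) (by decide +kernel))
  have hneg := hB.vanishesAt_add T C (C.e_mem_wtSpace 3) (by decide +kernel) (by decide +kernel) hy
    (C.lie_e_ne_zero isFiniteType_F₄ hM hy0 hy (by decide))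
    (hB.vanishesAt_neg (hB.vanishesAt_short T C))
  obtain ⟨w, hw, a, ha, haw⟩ := T.exists_lie_ne_zero C
  rw [show -![1, 0, -1, 1] + F₄.col 3 = ![-1, 0, 0, 1] by decide +kernel] at hneg
  simpa using hB.vanishesAt_add T C ha (by decide +kernel) (by decide +kernel) hw haw hneg

lemma apply_highest_lowest (hB : IsInvariantAlternating L B) (T : IsStandard K M h)
    (C : IsChevalley K F₄ h e f) {v v' : M} (hv : v ∈ wtSpace K M h ![1, 0, 0, 0])
    (hv' : v' ∈ wtSpace K M h (-![1, 0, 0, 0])) : B v v' = 0 := by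
  suffices ⊤ ≤ LinearMap.ker (B v v') from LinearMap.ker_eq_top.mp (top_le_iff.mp this)
  rw [← T.biSup_wtSpace_eq_top C]
  refine iSup₂_le fun l _ x hx => LinearMap.mem_ker.mpr ?_
  obtain rfl | hl := eq_or_ne l 0
  · rw [hB.swap_right, hB.swap_left, neg_neg]
    exact hB.vanishesAt_highest T C x hx v hv v' hv'
  · exact hB.eq_zero_of_add_ne_zero hv hv' hx (by rwa [add_neg_cancel, zero_add])

lemma eq_zero (hB : IsInvariantAlternating L B) (T : IsStandard K M h)
    (C : IsChevalley K F₄ h e f) : B = 0 := by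
  have := T.isIrreducible C
  obtain ⟨v, hv0, hv, hev⟩ := T.exists_highest C
  obtain ⟨v', hv0', hv', hfv'⟩ := T.neg.exists_highest C.symm
  have hBv : LinearMap.ker (B v) = ⊤ := by
    refine C.symm.eq_top_of_highest hv0' hv' hfv' ?_ fun i x hx => ?_
    · exact hB.apply_highest_lowest T C hv (by rwa [← wtSpace_neg])
    · ext z
      have := hB.lie (e i) v x z
      simpa [hev i, LinearMap.mem_ker.mp hx] using this
  refine LinearMap.ker_eq_top.mp (C.eq_top_of_highest hv0 hv hev (LinearMap.ker_eq_top.mp hBv)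
    fun i x hx => ?_)
  ext y z
  have := hB.lie (f i) x y z
  simpa [LinearMap.mem_ker.mp hx] using this

end IsInvariantAlternating

end Trilinear

/-! ### Modules without nonzero weights -/

section TrivialWeights

variable {K ι L M : Type*} [Field K] [LieRing L] [LieAlgebra K L] {A : Matrix ι ι ℤ}
  {h e f : ι → L} [AddCommGroup M] [Module K M] [LieRingModule L M] [LieModule K L M]

namespace IsChevalley

open LieModule (maxTrivSubmodule mem_maxTrivSubmodule)

lemma mem_maxTrivSubmodule_of_forall (C : IsChevalley K A h e f) {x : M} (he : ∀ i, ⁅e i, x⁆ = 0)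
    (hf : ∀ i, ⁅f i, x⁆ = 0) : x ∈ maxTrivSubmodule K L M := by
  let H : LieSubalgebra K L :=
    { carrier := {a | ⁅a, x⁆ = 0}
      add_mem' := fun {a b} (ha : ⁅a, x⁆ = 0) (hb : ⁅b, x⁆ = 0) =>
        show ⁅a + b, x⁆ = 0 by rw [add_lie, ha, hb, add_zero]
      zero_mem' := zero_lie x
      smul_mem' := fun c a (ha : ⁅a, x⁆ = 0) => show ⁅c • a, x⁆ = 0 by rw [smul_lie, ha, smul_zero]
      lie_mem' := fun {a b} (ha : ⁅a, x⁆ = 0) (hb : ⁅b, x⁆ = 0) =>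
        show ⁅⁅a, b⁆, x⁆ = 0 by rw [lie_lie, ha, hb, lie_zero, lie_zero, sub_zero] }
  exact (mem_maxTrivSubmodule K L M x).mpr (C.mem_of_forall_mem (H := H) he hf)

/-- If `x` has weight `l` modulo invariants and `l i ≠ 0`, then `⁅h i, x⁆` has weight `l`. -/
lemma wtSpace_quotient_maxTrivSubmodule_eq_bot [CharZero K] (C : IsChevalley K A h e f)
    (hM : ∀ l ≠ 0, wtSpace K M h l = ⊥) {l : ι → ℤ} (hl : l ≠ 0) :
    wtSpace K (M ⧸ maxTrivSubmodule K L M) h l = ⊥ := by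
  obtain ⟨i, hi⟩ := Function.ne_iff.mp hl
  refine (Submodule.eq_bot_iff _).mpr fun y hy => ?_
  obtain ⟨x, rfl⟩ := LieSubmodule.Quotient.surjective_mk' (maxTrivSubmodule K L M) y
  have hx (j : ι) (a : L) : ⁅a, ⁅h j, x⁆⁆ = l j • ⁅a, x⁆ := by
    rw [← sub_eq_zero, ← lie_zsmul, ← lie_sub]
    refine (mem_maxTrivSubmodule K L M _).mp ?_ a
    rw [← LieSubmodule.Quotient.mk_eq_zero, map_sub, LieModuleHom.map_lie, hy j, map_zsmul,
      sub_self]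
  have hhx : ⁅h i, x⁆ ∈ wtSpace K M h l := fun j => by
    rw [leibniz_lie, C.lie_h_h, zero_lie, zero_add, hx]
  rw [hM l hl, Submodule.mem_bot] at hhx
  have := hy i
  rw [← LieModuleHom.map_lie, hhx, map_zero, eq_comm, ← Int.cast_smul_eq_zsmul K] at this
  exact (smul_eq_zero.mp this).resolve_left (by exact_mod_cast hi)

variable [Fintype ι] [DecidableEq ι]

lemma wtSpace_zero_le_maxTrivSubmodule (C : IsChevalley K A h e f) (hA : IsFiniteType A)
    (hM : ∀ l ≠ 0, wtSpace K M h l = ⊥) : wtSpace K M h 0 ≤ maxTrivSubmodule K L M := by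
  intro x hx
  have hcol (i : ι) : A.col i ≠ 0 := fun hi => by simpa [hA.diag] using congrFun hi i
  refine C.mem_maxTrivSubmodule_of_forall (fun i => ?_) fun i => ?_
  · have := C.lie_e_mem_wtSpace i hx
    rwa [zero_add, hM _ (hcol i)] at this
  · have := C.lie_f_mem_wtSpace i hx
    rwa [zero_sub, hM _ (neg_ne_zero.mpr (hcol i))] at this

lemma isTrivial_of_forall_wtSpace_eq_bot [CharZero K] [IsAlgClosed K] [Nontrivial L]
    [FiniteDimensional K M] (C : IsChevalley K A h e f) (hA : IsFiniteType A)
    (hM : ∀ l ≠ 0, wtSpace K M h l = ⊥) : LieModule.IsTrivial L M := by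
  set N := maxTrivSubmodule K L M with hN
  rw [LieModule.isTrivial_iff_max_triv_eq_top K, ← hN]
  by_contra hne
  have : Nontrivial (M ⧸ N) := Submodule.Quotient.nontrivial_iff.mpr (by simpa using hne)
  obtain ⟨l, y, hy0, hy⟩ := C.exists_mem_wtSpace (M := M ⧸ N) hA
  have hMN (l : ι → ℤ) (hl : l ≠ 0) := C.wtSpace_quotient_maxTrivSubmodule_eq_bot hM hl
  obtain rfl : l = 0 := by_contra fun hl => hy0 ((Submodule.mem_bot K).mp (hMN l hl ▸ hy))
  obtain ⟨x, rfl⟩ := LieSubmodule.Quotient.surjective_mk' N y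
  have hx (a : L) : ⁅a, x⁆ ∈ N := by
    rw [← LieSubmodule.Quotient.mk_eq_zero, LieModuleHom.map_lie]
    exact (mem_maxTrivSubmodule K L _ _).mp (C.wtSpace_zero_le_maxTrivSubmodule hA hMN hy) a
  refine hy0 ((LieSubmodule.Quotient.mk_eq_zero _).mpr
    (C.wtSpace_zero_le_maxTrivSubmodule hA hM fun i => ?_))
  rw [← C.lie_e_f, lie_lie, (mem_maxTrivSubmodule K L M _).mp (hx _),
    (mem_maxTrivSubmodule K L M _).mp (hx _), sub_self, Pi.zero_apply, zero_smul]

end IsChevalley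

end TrivialWeights

/-! ### Invariant bilinear forms -/

section InvariantForms

variable {K L M : Type*} [Field K] [IsAlgClosed K] [LieRing L] [AddCommGroup M] [Module K M]
  [LieRingModule L M] [FiniteDimensional K M]

lemma exists_eq_smul_of_lieInvariant [LieModule.IsIrreducible K L M]
    {β β' : LinearMap.BilinForm K M} (hβ0 : β.Nondegenerate) (hβ : β.lieInvariant L)
    (hβ' : β'.lieInvariant L) : ∃ c : K, β' = c • β := by
  have : Nontrivial M := LieModule.nontrivial_of_isIrreducible K L M
  obtain ⟨c, hc⟩ := Module.End.exists_eigenvalue ((β.toDual hβ0).symm.toLinearMap ∘ₗ β')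
  obtain ⟨v, hv⟩ := hc.exists_hasEigenvector
  let N : LieSubmodule K L M :=
    { LinearMap.ker (β' - c • β) with
      lie_mem := fun {a x} (hx : (β' - c • β) x = 0) => by
        ext y
        have hxy : β' x ⁅a, y⁆ - c * β x ⁅a, y⁆ = 0 := LinearMap.congr_fun hx ⁅a, y⁆
        change β' ⁅a, x⁆ y - c * β ⁅a, x⁆ y = 0
        rw [hβ, hβ', mul_neg, ← neg_sub', hxy, neg_zero] }
  have hvN : v ∈ N := by
    have := congrArg (β.toDual hβ0) hv.apply_eq_smul
    simp only [LinearMap.comp_apply, LinearEquiv.coe_coe, LinearEquiv.apply_symm_apply] at this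
    change β' v - c • β v = 0
    rw [this, map_smul, sub_eq_zero]
    rfl
  have hN : N = ⊤ := (eq_bot_or_eq_top N).resolve_left fun hN => hv.2 (by simpa [hN] using hvN)
  refine ⟨c, LinearMap.ext fun x => sub_eq_zero.mp ?_⟩
  exact show x ∈ N from hN ▸ trivial

lemma exists_isometry [LieAlgebra K L] [LieModule K L M] {M' : Type*} [AddCommGroup M']
    [Module K M'] [LieRingModule L M'] [LieModule K L M'] [LieModule.IsIrreducible K L M]
    (t : M ≃ₗ⁅K,L⁆ M')
    {β : LinearMap.BilinForm K M} {β' : LinearMap.BilinForm K M'} (hβ0 : β.Nondegenerate)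
    (hβ0' : β'.Nondegenerate) (hβ : β.lieInvariant L) (hβ' : β'.lieInvariant L) :
    ∃ s : M ≃ₗ⁅K,L⁆ M', ∀ x y, β' (s x) (s y) = β x y := by
  have : Nontrivial M := LieModule.nontrivial_of_isIrreducible K L M
  obtain ⟨c, hc⟩ := exists_eq_smul_of_lieInvariant (β' := β'.comp t.toLinearMap t.toLinearMap)
    hβ0 hβ fun a x y => by simpa using hβ' a (t x) (t y)
  replace hc (x y : M) : β' (t x) (t y) = c * β x y := LinearMap.congr_fun₂ hc x y
  obtain ⟨v, hv⟩ := exists_ne (0 : M)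
  have hc0 : c ≠ 0 := by
    rintro rfl
    refine hv (t.injective ?_)
    rw [map_zero]
    refine hβ0'.1 _ fun y => ?_
    simpa using hc v (t.symm y)
  obtain ⟨r, hr⟩ := IsAlgClosed.exists_pow_nat_eq c⁻¹ two_pos
  have hr0 : r ≠ 0 := by rintro rfl; simp [hc0, eq_comm] at hr
  refine ⟨lieModuleEquivOfBijective (r • t.toLieModuleHom)
    ((LinearEquiv.smulOfNeZero K M' r hr0).bijective.comp t.toLinearEquiv.bijective), fun x y => ?_⟩
  change β' (r • t x) (r • t y) = _
  simp only [map_smul, LinearMap.smul_apply, smul_eq_mul, hc]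
  rw [← mul_assoc, ← mul_assoc, ← pow_two, hr, inv_mul_cancel₀ hc0, one_mul]

end InvariantForms

/-! ### Cartan's criterion for faithful modules -/

section Cartan

attribute [local instance] LieRing.ofAssociativeRing

variable (K L M : Type*) [Field K] [LieRing L] [LieAlgebra K L] [AddCommGroup M] [Module K M]
  [LieRingModule L M] [LieModule K L M]

instance [LieModule.IsFaithful K L M] (I : LieIdeal K L) : LieModule.IsFaithful K I M where
  injective_toEnd :=
    (LieModule.IsFaithful.injective_toEnd (R := K) (L := L) (M := M)).comp Subtype.val_injective

lemma isNilpotent_of_isFaithful [FiniteDimensional K L] [FiniteDimensional K M]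
    [LieModule.IsFaithful K L M] [LieModule.IsNilpotent L M] : LieRing.IsNilpotent L := by
  have : LieRing.IsNilpotent (toEnd K L M).range := by
    rw [LieAlgebra.isNilpotent_iff_forall (R := K)]
    rintro ⟨_, x, rfl⟩
    exact LieAlgebra.isNilpotent_ad_of_isNilpotent
      (LieModule.isNilpotent_toEnd_of_isNilpotent K L M x)
  refine Function.Injective.lieAlgebra_isNilpotent (f := (toEnd K L M).rangeRestrict) ?_
  exact fun x y hxy => LieModule.IsFaithful.injective_toEnd (congrArg Subtype.val hxy)

lemma isSolvable_of_traceForm_eq_zero [CharZero K] [FiniteDimensional K L] [FiniteDimensional K M]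
    [LieModule.IsFaithful K L M] (h : LieModule.traceForm K L M = 0) : LieAlgebra.IsSolvable L := by
  have := LieModule.isNilpotent_derivedSeries_of_traceForm_eq_zero h
  have := isNilpotent_of_isFaithful K (LieAlgebra.derivedSeries K L 1) M
  obtain ⟨k, hk⟩ := LieAlgebra.IsSolvable.solvable K (LieAlgebra.derivedSeries K L 1)
  rw [LieIdeal.derivedSeries_eq_bot_iff] at hk
  refine LieAlgebra.IsSolvable.mk (R := K) (k := k + 1) ?_
  rwa [LieAlgebra.derivedSeries_def, LieAlgebra.derivedSeriesOfIdeal_add]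

lemma traceForm_nondegenerate [CharZero K] [FiniteDimensional K L] [FiniteDimensional K M]
    [LieAlgebra.HasTrivialRadical K L] [LieModule.IsFaithful K L M] :
    (LieModule.traceForm K L M).Nondegenerate := by
  let J : LieIdeal K L := LieAlgebra.InvariantForm.orthogonal (LieModule.traceForm K L M)
    (LieModule.traceForm_lieInvariant K L M) ⊤
  have hJ {x : L} (hx : ∀ y, LieModule.traceForm K L M y x = 0) : x ∈ J :=
    (LieAlgebra.InvariantForm.mem_orthogonal ..).mpr fun y _ => hx y
  have : LieAlgebra.IsSolvable J := isSolvable_of_traceForm_eq_zero K J M <| by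
    ext x y
    exact (LieAlgebra.InvariantForm.mem_orthogonal ..).mp y.2 (x : L) trivial
  have hbot : J = ⊥ := LieAlgebra.HasTrivialRadical.eq_bot_of_isSolvable J
  refine (LieModule.traceForm_isSymm K L M).isRefl.nondegenerate_iff_separatingRight.mpr ?_
  exact fun x hx => (LieSubmodule.mem_bot x).mp (hbot ▸ hJ hx)

end Cartan

/-! ### The orthogonal complement of an embedded algebra -/

section Perp

variable {K L g : Type*} [Field K] [LieRing L] [LieAlgebra K L] [LieRing g] [LieAlgebra K g]

/-- The orthogonal complement of the range of `ε` for the Killing form of `g`. It is an `L`-module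
through `ε`. -/
noncomputable def perp (ε : L →ₗ⁅K⁆ g) : Submodule K g :=
  (killingForm K g).orthogonal (LinearMap.range (ε : L →ₗ[K] g))

variable {ε : L →ₗ⁅K⁆ g}

lemma mem_perp {w : g} : w ∈ perp ε ↔ ∀ x, killingForm K g (ε x) w = 0 := by
  simp [perp, LinearMap.BilinForm.mem_orthogonal_iff]

lemma lie_mem_perp (x : L) {w : g} (hw : w ∈ perp ε) : ⁅ε x, w⁆ ∈ perp ε :=
  mem_perp.mpr fun y => by
    rw [← LieModule.traceForm_apply_lie_apply, ← LieHom.map_lie, mem_perp.mp hw]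

instance : LieRingModule L (perp ε) where
  bracket x w := ⟨⁅ε x, (w : g)⁆, lie_mem_perp x w.2⟩
  add_lie x y w := Subtype.ext (by simp)
  lie_add x w z := Subtype.ext (by simp)
  leibniz_lie x y w := Subtype.ext (by simp)

@[simp]
lemma coe_lie_perp (x : L) (w : perp ε) : (⁅x, w⁆ : perp ε) = ⁅ε x, (w : g)⁆ := rfl

instance : LieModule K L (perp ε) where
  smul_lie c x w := Subtype.ext (by simp)
  lie_smul c x w := Subtype.ext (by simp)

lemma killingForm_lie_perp (w z : perp ε) (x : L) :
    killingForm K g ⁅(w : g), (z : g)⁆ (ε x) = -killingForm K g w (⁅x, z⁆ : perp ε) := by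
  rw [LieModule.traceForm_apply_lie_apply, ← lie_skew, map_neg, coe_lie_perp]

lemma lieInvariant_restrict_perp : ((killingForm K g).restrict (perp ε)).lieInvariant L :=
  fun x w z => LieModule.traceForm_lieInvariant K g g (ε x) w z

/-- The trilinear form `κ(⁅x, y⁆, z)` on the orthogonal complement, where `κ` is the Killing
form. -/
noncomputable def perpTrilinear (ε : L →ₗ⁅K⁆ g) : perp ε →ₗ[K] perp ε →ₗ[K] perp ε →ₗ[K] K :=
  ((LieAlgebra.ad K g : g →ₗ[K] Module.End K g).compl₁₂ (perp ε).subtype (perp ε).subtype).compr₂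
    ((killingForm K g).compl₂ (perp ε).subtype)

lemma perpTrilinear_apply (x y z : perp ε) :
    perpTrilinear ε x y z = killingForm K g ⁅(x : g), (y : g)⁆ z := rfl

lemma isInvariantAlternating_perpTrilinear : IsInvariantAlternating L (perpTrilinear ε) where
  swap_left x y z := by
    rw [perpTrilinear_apply, perpTrilinear_apply, ← lie_skew, map_neg, LinearMap.neg_apply]
  swap_right x y z := by
    rw [perpTrilinear_apply, perpTrilinear_apply, LieModule.traceForm_apply_lie_apply,
      LieModule.traceForm_apply_lie_apply, ← lie_skew (y : g) (z : g), map_neg]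
  lie a x y z := by
    simp only [perpTrilinear_apply, coe_lie_perp]
    rw [← LinearMap.add_apply, ← map_add, ← leibniz_lie,
      LieModule.traceForm_lieInvariant K g g (ε a), neg_add_cancel]

variable [CharZero K] [FiniteDimensional K g] [LieAlgebra.HasTrivialRadical K g]

lemma orthogonal_perp : (killingForm K g).orthogonal (perp ε) = LinearMap.range (ε : L →ₗ[K] g) :=
  LinearMap.BilinForm.orthogonal_orthogonal (LieAlgebra.IsKilling.killingForm_nondegenerate K g)
    (LieModule.traceForm_isSymm K g g).isRefl _

lemma lie_mem_range_of_isStandard [Nontrivial L] {h e f : Fin 4 → L}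
    (C : IsChevalley K CartanMatrix.F₄ h e f) (T : IsStandard K (perp ε) h) (x y : perp ε) :
    ∃ a, ε a = ⁅(x : g), (y : g)⁆ := by
  suffices ⁅(x : g), (y : g)⁆ ∈ (killingForm K g).orthogonal (perp ε) by
    rwa [orthogonal_perp] at this
  refine LinearMap.BilinForm.mem_orthogonal_iff.mpr fun z hz => ?_
  have hB : perpTrilinear ε = 0 := isInvariantAlternating_perpTrilinear.eq_zero T C
  exact (LieModule.traceForm_comm ..).trans
    (LinearMap.congr_fun (LinearMap.congr_fun₂ hB x y) ⟨z, hz⟩)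

variable [FiniteDimensional K L] [LieAlgebra.HasTrivialRadical K L]

lemma eq_zero_of_forall_killingForm_map (hε : Function.Injective ε) {x : L}
    (hx : ∀ y, killingForm K g (ε x) (ε y) = 0) : x = 0 := by
  let _ : LieRingModule L g := LieRingModule.compLieHom g ε
  have : LieModule K L g := LieModule.compLieHom g ε
  have : LieModule.IsFaithful K L g :=
    ⟨(LieModule.IsFaithful.injective_toEnd (R := K) (L := g) (M := g)).comp hε⟩
  exact (traceForm_nondegenerate K L g).1 x hx

lemma isCompl_range_perp (hε : Function.Injective ε) :
    IsCompl (LinearMap.range (ε : L →ₗ[K] g)) (perp ε) := by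
  refine (LinearMap.BilinForm.isCompl_orthogonal_iff_disjoint
    (LieModule.traceForm_isSymm K g g).isRefl).mpr (Submodule.disjoint_def.mpr ?_)
  rintro _ ⟨x, rfl⟩ hx
  have hx0 : x = 0 := eq_zero_of_forall_killingForm_map hε fun y => by
    rw [LieModule.traceForm_comm]
    exact mem_perp.mp hx y
  rw [hx0, map_zero]

lemma nondegenerate_restrict_perp (hε : Function.Injective ε) :
    ((killingForm K g).restrict (perp ε)).Nondegenerate := by
  refine (LinearMap.BilinForm.restrict_nondegenerate_iff_isCompl_orthogonal
    (LieModule.traceForm_isSymm K g g).isRefl).mpr ?_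
  rw [orthogonal_perp]
  exact (isCompl_range_perp hε).symm

/-- The decomposition of `g` as the direct sum of the image of `L` and its orthogonal
complement. -/
noncomputable def perpEquiv (hε : Function.Injective ε) : (L × perp ε) ≃ₗ[K] g :=
  ((LinearEquiv.ofInjective (ε : L →ₗ[K] g) hε).prodCongr (.refl K _)).trans
    (Submodule.prodEquivOfIsCompl _ _ (isCompl_range_perp hε))

lemma perpEquiv_apply (hε : Function.Injective ε) (p : L × perp ε) :
    perpEquiv hε p = ε p.1 + p.2 := rfl

lemma finrank_add_finrank_perp (hε : Function.Injective ε) :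
    finrank K L + finrank K (perp ε) = finrank K g := by
  rw [← finrank_prod, (perpEquiv hε).finrank_eq]

lemma surjective_of_isTrivial_perp [LieAlgebra.IsSimple K g] [Nontrivial L]
    (hε : Function.Injective ε) [LieModule.IsTrivial L (perp ε)] : Function.Surjective ε := by
  have hperp (x : L) (w : perp ε) : ⁅(w : g), ε x⁆ = 0 := by
    rw [← lie_skew, ← coe_lie_perp, LieModule.IsTrivial.trivial, ZeroMemClass.coe_zero, neg_zero]
  let I : LieIdeal K g :=
    { LinearMap.range (ε : L →ₗ[K] g) with
      lie_mem := by
        rintro a _ ⟨y, rfl⟩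
        obtain ⟨⟨x, w⟩, rfl⟩ := (perpEquiv hε).surjective a
        exact ⟨⁅x, y⁆, by simp [perpEquiv_apply, hperp]⟩ }
  have hI : I = ⊤ := by
    refine (LieAlgebra.IsSimple.eq_bot_or_eq_top (R := K) I).resolve_left fun hI => ?_
    obtain ⟨x, hx⟩ := exists_ne (0 : L)
    have hmem : ε x ∈ I := ⟨x, rfl⟩
    rw [hI, LieSubmodule.mem_bot, map_eq_zero_iff ε hε] at hmem
    exact hx hmem
  exact fun y => show y ∈ I from hI ▸ LieSubmodule.mem_top y

end Perp

/-! ### Conjugacy -/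

section Glue

variable {K L g : Type*} [Field K] [CharZero K] [LieRing L] [LieAlgebra K L]
  [FiniteDimensional K L] [LieAlgebra.HasTrivialRadical K L] [LieRing g] [LieAlgebra K g]
  [FiniteDimensional K g] [LieAlgebra.HasTrivialRadical K g] {ε ε' : L →ₗ⁅K⁆ g}

/-- The linear automorphism `ε x + w ↦ ε' x + t w` of `g`. -/
noncomputable def glueEquiv (hε : Function.Injective ε) (hε' : Function.Injective ε')
    (t : perp ε ≃ₗ⁅K,L⁆ perp ε') : g ≃ₗ[K] g :=
  (perpEquiv hε).symm.trans
    (((LinearEquiv.refl K L).prodCongr t.toLinearEquiv).trans (perpEquiv hε'))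

variable (hε : Function.Injective ε) (hε' : Function.Injective ε') (t : perp ε ≃ₗ⁅K,L⁆ perp ε')

lemma glueEquiv_map_add (x : L) (w : perp ε) : glueEquiv hε hε' t (ε x + w) = ε' x + t w := by
  rw [← perpEquiv_apply hε (x, w)]
  simp only [glueEquiv, LinearEquiv.trans_apply, LinearEquiv.symm_apply_apply]
  exact perpEquiv_apply hε' (x, t w)

@[simp]
lemma glueEquiv_map (x : L) : glueEquiv hε hε' t (ε x) = ε' x := by
  simpa using glueEquiv_map_add hε hε' t x 0

@[simp]
lemma glueEquiv_coe (w : perp ε) : glueEquiv hε hε' t w = t w := by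
  simpa using glueEquiv_map_add hε hε' t 0 w

lemma glueEquiv_lie_map (x : L) (v : g) :
    glueEquiv hε hε' t ⁅ε x, v⁆ = ⁅ε' x, glueEquiv hε hε' t v⁆ := by
  obtain ⟨⟨y, w⟩, rfl⟩ := (perpEquiv hε).surjective v
  have ht : t ⁅x, w⁆ = ⁅x, t w⁆ := t.toLieModuleHom.map_lie x w
  rw [perpEquiv_apply, lie_add, ← LieHom.map_lie, ← coe_lie_perp, glueEquiv_map_add,
    glueEquiv_map_add, ht, lie_add, LieHom.map_lie, coe_lie_perp]

include hε hε' t in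
lemma killingForm_map_eq_of_equiv (x y : L) :
    killingForm K g (ε' x) (ε' y) = killingForm K g (ε x) (ε y) := by
  rw [killingForm_apply_apply, killingForm_apply_apply, ← LinearMap.trace_conj'
    (LieAlgebra.ad K g (ε x) ∘ₗ LieAlgebra.ad K g (ε y)) (glueEquiv hε hε' t)]
  congr 1
  ext z
  change ⁅ε' x, ⁅ε' y, z⁆⁆ = glueEquiv hε hε' t ⁅ε x, ⁅ε y, (glueEquiv hε hε' t).symm z⁆⁆
  rw [glueEquiv_lie_map, glueEquiv_lie_map, LinearEquiv.apply_symm_apply]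

variable {t}

include hε hε'

lemma eq_of_lie_eq_map (ht : ∀ w z, killingForm K g (t w) (t z) = killingForm K g w z)
    {w z : perp ε} {a a' : L} (ha : ε a = ⁅(w : g), (z : g)⁆)
    (ha' : ε' a' = ⁅(t w : g), (t z : g)⁆) : a = a' := by
  refine sub_eq_zero.mp (eq_zero_of_forall_killingForm_map hε' fun x => ?_)
  have hxz : ⁅x, t z⁆ = t ⁅x, z⁆ := (t.toLieModuleHom.map_lie x z).symm
  rw [map_sub, map_sub, LinearMap.sub_apply, killingForm_map_eq_of_equiv hε hε' t, ha, ha',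
    killingForm_lie_perp, killingForm_lie_perp, hxz, ht, sub_self]

theorem exists_equiv_of_isometry
    (ht : ∀ w z, killingForm K g (t w) (t z) = killingForm K g w z)
    (hW : ∀ w z : perp ε, ∃ a, ε a = ⁅(w : g), (z : g)⁆)
    (hW' : ∀ w z : perp ε', ∃ a, ε' a = ⁅(w : g), (z : g)⁆) :
    ∃ φ : g ≃ₗ⁅K⁆ g, ∀ x, ε' x = φ (ε x) := by
  set φ := glueEquiv hε hε' t with hφ
  have map_lie_perp (w z : perp ε) : φ ⁅(w : g), (z : g)⁆ = ⁅φ w, φ z⁆ := by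
    obtain ⟨a, ha⟩ := hW w z
    obtain ⟨a', ha'⟩ := hW' (t w) (t z)
    rw [hφ, glueEquiv_coe, glueEquiv_coe, ← ha, ← ha', glueEquiv_map,
      eq_of_lie_eq_map hε hε' ht ha ha']
  have map_lie_coe (w : perp ε) (v : g) : φ ⁅(w : g), v⁆ = ⁅φ w, φ v⁆ := by
    obtain ⟨⟨y, z⟩, rfl⟩ := (perpEquiv hε).surjective v
    rw [perpEquiv_apply, lie_add, map_add, map_add, lie_add, map_lie_perp, ← lie_skew, map_neg,
      glueEquiv_lie_map, lie_skew, glueEquiv_map]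
  have map_lie (u v : g) : φ ⁅u, v⁆ = ⁅φ u, φ v⁆ := by
    obtain ⟨⟨x, w⟩, rfl⟩ := (perpEquiv hε).surjective u
    rw [perpEquiv_apply, add_lie, map_add, map_add, add_lie, map_lie_coe, glueEquiv_lie_map,
      glueEquiv_map]
  exact ⟨{ φ with map_lie' := map_lie _ _ }, fun x => (glueEquiv_map hε hε' t x).symm⟩

end Glue

section Conjugacy

variable {K L g : Type*} [Field K] [LieRing L] [LieAlgebra K L] [LieRing g] [LieAlgebra K g]
  {ε ε' : L →ₗ⁅K⁆ g}

lemma exists_equiv_of_surjective [FiniteDimensional K L] (hε : Function.Injective ε)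
    (hε' : Function.Injective ε') (hs : Function.Surjective ε) :
    ∃ φ : g ≃ₗ⁅K⁆ g, ∀ x, ε' x = φ (ε x) := by
  let η := LieEquiv.ofBijective ε ⟨hε, hs⟩
  have : FiniteDimensional K g := Module.Finite.equiv η.toLinearEquiv
  have hs' : Function.Surjective ε' :=
    (LinearMap.injective_iff_surjective_of_finrank_eq_finrank (f := (ε' : L →ₗ[K] g))
      η.toLinearEquiv.finrank_eq).mp hε'
  refine ⟨η.symm.trans (LieEquiv.ofBijective ε' ⟨hε', hs'⟩), fun x => ?_⟩
  exact congrArg ε' (η.symm_apply_apply x).symm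

variable [IsAlgClosed K] [CharZero K] [FiniteDimensional K L] [Nontrivial L]
  [FiniteDimensional K g] [LieAlgebra.IsSimple K g] {h e f : Fin 4 → L}

namespace IsChevalley

lemma surjective_or_isStandard_perp (C : IsChevalley K CartanMatrix.F₄ h e f)
    (hε : Function.Injective ε) (hg : finrank K g ≤ 78) :
    Function.Surjective ε ∨ IsStandard K (perp ε) h := by
  have : LieAlgebra.IsSimple K L := C.isSimple isFiniteType_F₄
  refine or_iff_not_imp_left.mpr fun hs => ⟨?_, ?_⟩
  · have := finrank_add_finrank_perp hε
    have := C.le_finrank_F₄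
    omega
  · by_contra! hM
    have := C.isTrivial_of_forall_wtSpace_eq_bot isFiniteType_F₄ hM
    exact hs (surjective_of_isTrivial_perp hε)

theorem exists_equiv_of_finrank_le (C : IsChevalley K CartanMatrix.F₄ h e f)
    (hε : Function.Injective ε) (hε' : Function.Injective ε') (hg : finrank K g ≤ 78) :
    ∃ φ : g ≃ₗ⁅K⁆ g, ∀ x, ε' x = φ (ε x) := by
  have : LieAlgebra.IsSimple K L := C.isSimple isFiniteType_F₄
  rcases C.surjective_or_isStandard_perp hε hg with hs | T
  · exact exists_equiv_of_surjective hε hε' hs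
  rcases C.surjective_or_isStandard_perp hε' hg with hs' | T'
  · obtain ⟨φ, hφ⟩ := exists_equiv_of_surjective hε' hε hs'
    exact ⟨φ.symm, fun x => by rw [hφ, φ.symm_apply_apply]⟩
  have := T.isIrreducible C
  obtain ⟨t⟩ := T.nonempty_equiv T' C
  obtain ⟨s, hs⟩ := exists_isometry t (nondegenerate_restrict_perp hε)
    (nondegenerate_restrict_perp hε') lieInvariant_restrict_perp lieInvariant_restrict_perp
  exact exists_equiv_of_isometry hε hε' hs (lie_mem_range_of_isStandard C T)
    (lie_mem_range_of_isStandard C T')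

end IsChevalley

end Conjugacy

end F4E6

open F4E6 in
theorem stmt_17_general {K : Type*} [Field K] [IsAlgClosed K] [CharZero K]
    (ε ε' : LieAlgebra.f₄ K →ₗ⁅K⁆ LieAlgebra.e₆ K)
    (hε : Function.Injective ε) (hε' : Function.Injective ε') :
    ∃ φ : LieAlgebra.e₆ K ≃ₗ⁅K⁆ LieAlgebra.e₆ K, ∀ x : LieAlgebra.f₄ K, ε' x = φ (ε x) := by
  rcases subsingleton_or_nontrivial (LieAlgebra.f₄ K) with h | h
  · exact ⟨LieEquiv.refl, fun x => by rw [Subsingleton.elim x 0, map_zero, map_zero, map_zero]⟩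
  have : Nontrivial (LieAlgebra.e₆ K) := hε.nontrivial
  obtain ⟨_, hdim⟩ := finite_e₆_and_finrank_le K
  have : FiniteDimensional K (LieAlgebra.f₄ K) :=
    FiniteDimensional.of_injective (ε : LieAlgebra.f₄ K →ₗ[K] LieAlgebra.e₆ K) hε
  have : LieAlgebra.IsSimple K (LieAlgebra.e₆ K) :=
    (isChevalley_serre K CartanMatrix.E₆).isSimple isFiniteType_E₆
  exact (isChevalley_serre K CartanMatrix.F₄).exists_equiv_of_finrank_le hε hε' hdim

/-- Any two injective Lie algebra homomorphisms from LieAlgebra.f₄ ℂ to LieAlgebra.e₆ ℂ are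
conjugate by a Lie algebra automorphism of the codomain. -/
theorem stmt_17 (ε ε' : LieAlgebra.f₄ ℂ →ₗ⁅ℂ⁆ LieAlgebra.e₆ ℂ)
    (hε : Function.Injective ε) (hε' : Function.Injective ε') :
    ∃ φ : LieAlgebra.e₆ ℂ ≃ₗ⁅ℂ⁆ LieAlgebra.e₆ ℂ, ∀ x : LieAlgebra.f₄ ℂ, ε' x = φ (ε x) :=
  stmt_17_general ε ε' hε hε'
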